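/- Let w be a smooth solution of □w = F on ℝ₊ × ℝ⁴ with w(0,·) = w₀, ∂_t w(0,·) = w₁, which vanishes for large |x| for each t. Then for every δ > 0 there is a constant C (independent of T and w) such that for all T > 0, ‖⟨x⟩^{−1/2−δ} w'‖_{L²_{t,x}([0,T]×ℝ⁴)} + ‖⟨x⟩^{−3/2} w‖_{L²_{t,x}([0,T]×ℝ⁴)} ≤ C ( ‖w'(0,·)‖_{L²(ℝ⁴)} + ∫₀^T ‖□w(t,·)‖_{L²(ℝ⁴)} dt ). -/

import Mathlib

/-!
Morawetz's multiplier method: pairing `□w` with `X · ∇w + q w`, for a radial field `X = φ(r) x`,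
gives `∂ₜ (momentum) + div (flux) ≤ forcing - bulk`, where the bulk density is coercive as soon as
`⟪DX ξ, ξ⟫ ≥ (div X - 2 q) |ξ|²`, `div X - 2 q > 0` and `-Δ q > 0`. In dimension at least four a
single bounded multiplier yields both weighted terms at once, the lower order one coming from
`-Δ q ≳ ⟨x⟩⁻³`. Hardy's inequality bounds the momentum by the energy.

The supports of `w(t, ·)` need not be uniform in `t`, so one cannot integrate by parts globally in
space-time. Instead everything is localised to a backward light cone with a cutoff which decreases
in time at least as fast as it varies in space: in the energy identity the cutoff terms then have a
favourable sign, in the Morawetz identity they are `O(1 / R)`, and the radius `R` tends to infinity.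
-/

open MeasureTheory Real Set
open scoped ENNReal FourierTransform

noncomputable section

/-- Euclidean space ℝⁿ. -/
abbrev Eu (n : ℕ) : Type := EuclideanSpace ℝ (Fin n)

/-- Spatial partial derivative ∂_i of a function on ℝⁿ. -/
def sd {n : ℕ} (i : Fin n) (h : Eu n → ℝ) : Eu n → ℝ :=
  fun x => fderiv ℝ h x (EuclideanSpace.single i 1)

/-- Iterated spatial derivatives ∂_x^μ. -/
def sdIter {n : ℕ} : {m : ℕ} → (Fin m → Fin n) → (Eu n → ℝ) → Eu n → ℝ
  | 0, _, h => h
  | m + 1, μ, h => sd (μ 0) (sdIter (fun i : Fin m => μ i.succ) h)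

/-- Time derivative ∂_t of u(t,x). -/
def td {n : ℕ} (u : ℝ → Eu n → ℝ) : ℝ → Eu n → ℝ :=
  fun t x => deriv (fun s => u s x) t

/-- Space-time partial derivative ∂_α, with ∂₀ = ∂_t. -/
def pd {n : ℕ} (α : Fin (n + 1)) (u : ℝ → Eu n → ℝ) : ℝ → Eu n → ℝ :=
  if h : α = 0 then td u else fun t x => sd (α.pred h) (u t) x

/-- Iterated space-time derivatives ∂^μ. -/
def pdIter {n : ℕ} : {m : ℕ} → (Fin m → Fin (n + 1)) → (ℝ → Eu n → ℝ) → ℝ → Eu n → ℝ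
  | 0, _, u => u
  | m + 1, μ, u => pd (μ 0) (pdIter (fun i : Fin m => μ i.succ) u)

/-- Iterated spatial derivatives of a space-time function. -/
def sdIterT {n m : ℕ} (μ : Fin m → Fin n) (u : ℝ → Eu n → ℝ) : ℝ → Eu n → ℝ :=
  fun t x => sdIter μ (u t) x

/-- The d'Alembertian □ = ∂_t² − Δ. -/
def dAlembert {n : ℕ} (u : ℝ → Eu n → ℝ) : ℝ → Eu n → ℝ :=
  fun t x => td (td u) t x - ∑ i : Fin n, sd i (sd i (u t)) x

/-- |u'| : the magnitude of the space-time gradient (∂_t u, ∇_x u). -/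
def gradMag {n : ℕ} (u : ℝ → Eu n → ℝ) : ℝ → Eu n → ℝ :=
  fun t x => Real.sqrt (∑ α : Fin (n + 1), pd α u t x ^ 2)

/-- Smoothness of a space-time function. -/
def SmoothTX {n : ℕ} (u : ℝ → Eu n → ℝ) : Prop :=
  ContDiff ℝ (⊤ : ℕ∞) fun p : ℝ × Eu n => u p.1 p.2

/-- L² norm over a region S ⊆ ℝⁿ. -/
def L2x {n : ℕ} (S : Set (Eu n)) (f : Eu n → ℝ) : ℝ≥0∞ :=
  eLpNorm f 2 (volume.restrict S)

/-- Space-time L² norm over [0,T] × S. -/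
def L2st {n : ℕ} (T : ℝ) (S : Set (Eu n)) (u : ℝ → Eu n → ℝ) : ℝ≥0∞ :=
  eLpNorm (fun p : ℝ × Eu n => u p.1 p.2) 2
    ((volume.restrict (Icc 0 T)).prod (volume.restrict S))

/-- Japanese bracket ⟨x⟩ = (1+|x|²)^{1/2}. -/
def jap {n : ℕ} (x : Eu n) : ℝ := Real.sqrt (1 + ‖x‖ ^ 2)

/-- Homogeneous Sobolev norm ‖f‖_{Ḣ^s} = ‖ |ξ|^s 𝓕f(ξ) ‖_{L²}. -/
def sobolevHom {n : ℕ} (s : ℝ) (f : Eu n → ℝ) : ℝ≥0∞ :=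
  eLpNorm (fun ξ : Eu n => ‖ξ‖ ^ s * ‖𝓕 (fun x : Eu n => (f x : ℂ)) ξ‖) 2 volume

/-- A smooth compact obstacle K = {ρ ≤ 0} given by a smooth defining function. -/
structure SmoothObstacle (n : ℕ) where
  ρ : Eu n → ℝ
  smooth : ContDiff ℝ (⊤ : ℕ∞) ρ
  K : Set (Eu n)
  K_def : K = {x | ρ x ≤ 0}
  compact : IsCompact K
  grad_ne : ∀ x, ρ x = 0 → fderiv ℝ ρ x ≠ 0

/-- Ordered pairs (j,k), j < k, indexing the rotation fields Ω_{jk} on ℝ⁴. -/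
abbrev OP : Type := {p : Fin 4 × Fin 4 // p.1 < p.2}

/-- Rotation vector field Ω_{jk} = x_j ∂_k − x_k ∂_j. -/
def rot (j k : Fin 4) (h : Eu 4 → ℝ) : Eu 4 → ℝ :=
  fun x => x j * sd k h x - x k * sd j h x

/-- Products Ω^μ of rotation vector fields. -/
def rotIter : {m : ℕ} → (Fin m → OP) → (Eu 4 → ℝ) → Eu 4 → ℝ
  | 0, _, h => h
  | m + 1, μ, h => rot (μ 0).1.1 (μ 0).1.2 (rotIter (fun i : Fin m => μ i.succ) h)

/-- Radial derivative ∇_r = (x/|x|)·∇. -/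
def radialD (h : Eu 4 → ℝ) : Eu 4 → ℝ :=
  fun x => fderiv ℝ h x (‖x‖⁻¹ • x)

/-- Iterated radial derivatives ∇_r^j. -/
def radialIter : ℕ → (Eu 4 → ℝ) → Eu 4 → ℝ
  | 0, h => h
  | j + 1, h => radialD (radialIter j h)

/-- Magnitude of the spatial gradient ∇_x h. -/
def spGradMag (h : Eu 4 → ℝ) : Eu 4 → ℝ :=
  fun x => Real.sqrt (∑ i : Fin 4, sd i h x ^ 2)

/-- Index set for the fields Z = {∂_α, Ω_{jk}}. -/
abbrev ZIdx : Type := Fin 5 ⊕ OP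

/-- Action of a single field Z. -/
def applyZ : ZIdx → (ℝ → Eu 4 → ℝ) → ℝ → Eu 4 → ℝ
  | Sum.inl α, u => pd (n := 4) α u
  | Sum.inr p, u => fun t x => rot p.1.1 p.1.2 (u t) x

/-- Products Z^μ of the fields Z. -/
def ZIter : {m : ℕ} → (Fin m → ZIdx) → (ℝ → Eu 4 → ℝ) → ℝ → Eu 4 → ℝ
  | 0, _, u => u
  | m + 1, μ, u => applyZ (μ 0) (ZIter (fun i : Fin m => μ i.succ) u)

/-- The perturbed d'Alembertian □_h φ = □φ + h^{αβ} ∂_α ∂_β φ. -/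
def boxH (h : Fin 5 → Fin 5 → ℝ → Eu 4 → ℝ) (φ : ℝ → Eu 4 → ℝ) : ℝ → Eu 4 → ℝ :=
  fun t x => dAlembert φ t x
    + ∑ α : Fin 5, ∑ β : Fin 5, h α β t x * pd (n := 4) α (pd (n := 4) β φ) t x

/-- |h| = Σ_{α,β} |h^{αβ}|. -/
def habs (h : Fin 5 → Fin 5 → ℝ → Eu 4 → ℝ) : ℝ → Eu 4 → ℝ :=
  fun t x => ∑ α : Fin 5, ∑ β : Fin 5, |h α β t x|

/-- |∂h| = Σ_{α,β,γ} |∂_γ h^{αβ}|. -/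
def dhabs (h : Fin 5 → Fin 5 → ℝ → Eu 4 → ℝ) : ℝ → Eu 4 → ℝ :=
  fun t x => ∑ γ : Fin 5, ∑ α : Fin 5, ∑ β : Fin 5, |pd (n := 4) γ (h α β) t x|

/-- Mixed norm ‖G‖_{L¹_t L¹_r L²_ω(ℝ₊×ℝ⁴)}. -/
def mixedNorm (G : ℝ → Eu 4 → ℝ) : ℝ≥0∞ :=
  ∫⁻ t in Ioi (0 : ℝ), ∫⁻ r in Ioi (0 : ℝ),
    eLpNorm (fun ω : Metric.sphere (0 : Eu 4) 1 => G t (r • (ω : Eu 4))) 2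
        (volume : Measure (Eu 4)).toSphere
      * ENNReal.ofReal (r ^ 3)

/-- The quantity M(T) (for `kmax = 50`) and A(T) (for `kmax = 49`) from the iteration. -/
def Mgen (kmax : ℕ) (Kc : Set (Eu 4)) (δ : ℝ) (u : ℝ → Eu 4 → ℝ) (T : ℝ) : ℝ≥0∞ :=
  (∑ m ∈ Finset.range (kmax + 1), ∑ μ : Fin m → Fin 5,
      ((⨆ t ∈ Icc (0 : ℝ) T, L2x Kc fun x => gradMag (pdIter (n := 4) μ u) t x)
        + L2st T Kc fun t x => jap x ^ (-(1/2 : ℝ) - δ) * gradMag (pdIter (n := 4) μ u) t x))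
  + (∑ m ∈ Finset.range kmax, ∑ μ : Fin m → ZIdx,
      ((L2st T Kc fun t x => jap x ^ (-(1/2 : ℝ) - δ) * gradMag (ZIter μ u) t x)
        + (L2st T (Kc ∩ {x : Eu 4 | 2 < ‖x‖}) fun t x =>
            jap x ^ (-(1/2 : ℝ) - 2*δ) * ZIter μ u t x)
        + ⨆ t ∈ Icc (0 : ℝ) T, L2x Kc fun x => gradMag (ZIter μ u) t x))
  + L2st T (Kc ∩ {x : Eu 4 | ‖x‖ < 3}) u

/-- The data (f,g) satisfy the compatibility conditions to infinite order for the
Dirichlet problem □u = Q(u) on the exterior of {ρ ≤ 0}: there is a smooth function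
attaining the data, vanishing on the boundary, and solving the equation
to infinite order at t = 0 (its Taylor coefficients at t = 0 are the formal ψ_k). -/
def CompatInfty {n : ℕ} (ρ : Eu n → ℝ) (f g : Eu n → ℝ)
    (Q : (ℝ → Eu n → ℝ) → ℝ → Eu n → ℝ) : Prop :=
  ∃ U : ℝ → Eu n → ℝ, SmoothTX U ∧ (∀ x, U 0 x = f x) ∧ (∀ x, td U 0 x = g x) ∧
    (∀ t x, ρ x = 0 → U t x = 0) ∧
    ∀ k : ℕ, ∀ x, 0 ≤ ρ x → td^[k] (fun s y => dAlembert U s y - Q U s y) 0 x = 0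

/-- The general quasilinear nonlinearity Q(u,u',u'') = A(u,u') + B^{αβ}(u,u') ∂_α∂_β u. -/
def Qnl {n : ℕ} (A : ℝ × (Fin (n + 1) → ℝ) → ℝ)
    (B : Fin (n + 1) → Fin (n + 1) → ℝ × (Fin (n + 1) → ℝ) → ℝ)
    (u : ℝ → Eu n → ℝ) : ℝ → Eu n → ℝ :=
  fun t x => A (u t x, fun α => pd α u t x)
    + ∑ α, ∑ β, B α β (u t x, fun γ => pd γ u t x) * pd α (pd β u) t x

/-- The quadratically truncated nonlinearity, evaluated on the pair (v,w);
the iteration RHS is `iterRHS a b A B u_{l-1} u_l`. -/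
def iterRHS (a : Fin 5 → ℝ) (b A : Fin 5 → Fin 5 → ℝ) (B : Fin 5 → Fin 5 → Fin 5 → ℝ)
    (v w : ℝ → Eu 4 → ℝ) : ℝ → Eu 4 → ℝ :=
  fun t x => (∑ α : Fin 5, a α * v t x * pd (n := 4) α v t x)
    + (∑ α : Fin 5, ∑ β : Fin 5, b α β * pd (n := 4) α v t x * pd (n := 4) β v t x)
    + (∑ α : Fin 5, ∑ β : Fin 5, A α β * v t x * pd (n := 4) α (pd (n := 4) β w) t x)
    + (∑ α : Fin 5, ∑ β : Fin 5, ∑ γ : Fin 5,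
        B α β γ * pd (n := 4) α v t x * pd (n := 4) β (pd (n := 4) γ w) t x)

open InnerProductSpace Filter Asymptotics Module
open scoped Gradient Laplacian Topology

section Divergence

variable {E : Type*} [NormedAddCommGroup E] [InnerProductSpace ℝ E] {f g : E → ℝ} {P Q : E → E}
  {x : E}

/-- The divergence of a vector field, as the trace of its derivative. -/
def divergence (P : E → E) (x : E) : ℝ :=
  LinearMap.trace ℝ E (fderiv ℝ P x)

theorem divergence_add (hP : DifferentiableAt ℝ P x) (hQ : DifferentiableAt ℝ Q x) :
    divergence (fun y => P y + Q y) x = divergence P x + divergence Q x := by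
  simp only [divergence, fderiv_fun_add hP hQ, ContinuousLinearMap.toLinearMap_add, map_add]

theorem divergence_const_smul (c : ℝ) (hP : DifferentiableAt ℝ P x) :
    divergence (fun y => c • P y) x = c * divergence P x := by
  simp only [divergence, fderiv_fun_const_smul hP, ContinuousLinearMap.toLinearMap_smul, map_smul,
    smul_eq_mul]

theorem hasCompactSupport_divergence (hs : HasCompactSupport P) :
    HasCompactSupport (divergence P) :=
  (hs.fderiv ℝ).comp_left (map_zero (LinearMap.trace ℝ E ∘ₗ ContinuousLinearMap.coeLM ℝ))

variable [FiniteDimensional ℝ E]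

theorem hasCompactSupport_gradient (hs : HasCompactSupport f) : HasCompactSupport (∇ f) :=
  (hs.fderiv ℝ).comp_left (map_zero (toDual ℝ E).symm)

theorem divergence_smul (hf : DifferentiableAt ℝ f x) (hP : DifferentiableAt ℝ P x) :
    divergence (fun y => f y • P y) x = f x * divergence P x + ⟪∇ f x, P x⟫_ℝ := by
  simp [divergence, fderiv_fun_smul hf hP, inner_gradient_left]

theorem gradient_fun_neg (f : E → ℝ) (x : E) : ∇ (fun y => -f y) x = -∇ f x := by
  simp [gradient]

theorem gradient_sub (hf : Differentiable ℝ f) (hg : Differentiable ℝ g) :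
    ∇ (f - g) = ∇ f - ∇ g := by
  funext x
  simp [gradient, fderiv_sub (hf x) (hg x)]

theorem gradient_const_smul (c : ℝ) (hf : Differentiable ℝ f) : ∇ (c • f) = c • ∇ f := by
  funext x
  simp [gradient, fderiv_const_smul (hf x)]

theorem contDiff_gradient {m k : WithTop ℕ∞} (hf : ContDiff ℝ k f) (hm : m + 1 ≤ k) :
    ContDiff ℝ m (∇ f) :=
  (toDual ℝ E).symm.contDiff.comp (hf.fderiv_right hm)

theorem inner_fderiv_gradient (hf : ContDiff ℝ 2 f) (x ξ η : E) :
    ⟪fderiv ℝ (∇ f) x ξ, η⟫_ℝ = fderiv ℝ (fderiv ℝ f) x ξ η := by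
  have hgrad : DifferentiableAt ℝ (∇ f) x :=
    (contDiff_gradient hf le_rfl).differentiable one_ne_zero x
  have hfderiv : DifferentiableAt ℝ (fderiv ℝ f) x :=
    (hf.fderiv_right le_rfl).differentiable one_ne_zero x
  have h : fderiv ℝ (fun y => ⟪∇ f y, η⟫_ℝ) x ξ = fderiv ℝ (fun y => fderiv ℝ f y η) x ξ := by
    simp only [inner_gradient_left]
  rw [fderiv_inner_apply ℝ hgrad (differentiableAt_const η),
    fderiv_clm_apply hfderiv (differentiableAt_const η)] at h
  simpa using h

theorem inner_fderiv_gradient_comm (hf : ContDiff ℝ 2 f) (x ξ η : E) :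
    ⟪fderiv ℝ (∇ f) x ξ, η⟫_ℝ = ⟪ξ, fderiv ℝ (∇ f) x η⟫_ℝ := by
  rw [real_inner_comm _ ξ, inner_fderiv_gradient hf, inner_fderiv_gradient hf]
  exact (hf.contDiffAt.isSymmSndFDerivAt (by simp)) ξ η

theorem laplacian_eq_divergence_gradient (hf : ContDiff ℝ 2 f) (x : E) :
    Δ f x = divergence (∇ f) x := by
  rw [laplacian_eq_iteratedFDeriv_stdOrthonormalBasis, divergence,
    LinearMap.trace_eq_sum_inner _ (stdOrthonormalBasis ℝ E)]
  refine Finset.sum_congr rfl fun i _ => ?_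
  rw [iteratedFDeriv_two_apply, ContinuousLinearMap.coe_coe, real_inner_comm,
    inner_fderiv_gradient hf]
  rfl

theorem continuous_divergence (hP : ContDiff ℝ 1 P) : Continuous (divergence P) :=
  (LinearMap.continuous_of_finiteDimensional
    (LinearMap.trace ℝ E ∘ₗ ContinuousLinearMap.coeLM ℝ)).comp (hP.continuous_fderiv one_ne_zero)

variable [MeasurableSpace E] [BorelSpace E]

theorem integral_fderiv_apply_eq_zero (hf : ContDiff ℝ 1 f) (hs : HasCompactSupport f) (v : E) :
    ∫ x, fderiv ℝ f x v = 0 := by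
  have hf' : Integrable fun x => fderiv ℝ f x v :=
    ((hf.continuous_fderiv one_ne_zero).clm_apply continuous_const).integrable_of_hasCompactSupport
      (hs.fderiv_apply ℝ v)
  simpa using integral_mul_fderiv_eq_neg_fderiv_mul_of_integrable (μ := volume)
    (f := fun _ : E => (1 : ℝ)) (g := f) (v := v) (by simp) (by simpa using hf')
    (by simpa using hf.continuous.integrable_of_hasCompactSupport hs)
    (fun _ _ => differentiableAt_const _) (fun x _ => hf.differentiable one_ne_zero x)

theorem integral_divergence_eq_zero (hP : ContDiff ℝ 1 P) (hs : HasCompactSupport P) :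
    ∫ x, divergence P x = 0 := by
  set b := stdOrthonormalBasis ℝ E
  have hcoord (i) : ContDiff ℝ 1 fun y => ⟪b i, P y⟫_ℝ := contDiff_const.inner ℝ hP
  have hsupp (i) : HasCompactSupport fun y => ⟪b i, P y⟫_ℝ :=
    hs.comp_left (g := fun y => ⟪b i, y⟫_ℝ) (inner_zero_right _)
  have hdiv (x : E) : divergence P x = ∑ i, fderiv ℝ (fun y => ⟪b i, P y⟫_ℝ) x (b i) := by
    simp [divergence, LinearMap.trace_eq_sum_inner _ b,
      fderiv_inner_apply ℝ (differentiableAt_const _) (hP.differentiable one_ne_zero x)]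
  simp only [hdiv]
  rw [integral_finsetSum]
  · exact Finset.sum_eq_zero fun i _ => integral_fderiv_apply_eq_zero (hcoord i) (hsupp i) _
  · exact fun i _ => (((hcoord i).continuous_fderiv one_ne_zero).clm_apply
      continuous_const).integrable_of_hasCompactSupport ((hsupp i).fderiv_apply ℝ _)

theorem integral_le_of_le_add_divergence {c : ℝ} (hf : Integrable f) (hg : Integrable g)
    (hP : ContDiff ℝ 1 P) (hs : HasCompactSupport P)
    (hfg : ∀ x, f x ≤ g x + c * divergence P x) : ∫ x, f x ≤ ∫ x, g x := by
  have hdiv : Integrable fun x => c * divergence P x :=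
    ((continuous_divergence hP).integrable_of_hasCompactSupport
      (hasCompactSupport_divergence hs)).const_mul c
  calc ∫ x, f x ≤ ∫ x, (g x + c * divergence P x) := integral_mono hf (hg.add hdiv) hfg
    _ = ∫ x, g x := by
        rw [integral_add hg hdiv, integral_const_mul, integral_divergence_eq_zero hP hs, mul_zero,
          add_zero]

end Divergence

section JapanesePower

variable {E : Type*} [NormedAddCommGroup E]

/-- The power `⟨x⟩ ^ s` of the Japanese bracket on an arbitrary normed space; it is a power of
`1 + ‖x‖ ^ 2`, so that its smoothness is visible. -/
def japPow (s : ℝ) (x : E) : ℝ :=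
  (1 + ‖x‖ ^ 2) ^ (s / 2)

theorem one_le_one_add_norm_sq (x : E) : 1 ≤ 1 + ‖x‖ ^ 2 :=
  le_add_of_nonneg_right (sq_nonneg _)

theorem japPow_pos (s : ℝ) (x : E) : 0 < japPow s x :=
  rpow_pos_of_pos (by positivity) _

@[simp]
theorem japPow_zero (x : E) : japPow 0 x = 1 := by
  simp [japPow]

theorem japPow_mul_japPow (s t : ℝ) (x : E) : japPow s x * japPow t x = japPow (s + t) x := by
  rw [japPow, japPow, japPow, ← rpow_add (by positivity), add_div]

theorem japPow_sq (s : ℝ) (x : E) : japPow s x ^ 2 = japPow (2 * s) x := by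
  rw [sq, japPow_mul_japPow, two_mul]

theorem japPow_neg_one_mul_abs_sq (x : E) (r : ℝ) :
    (japPow (-1) x * |r|) ^ 2 = japPow (-2) x * r ^ 2 := by
  rw [mul_pow, japPow_sq, sq_abs]
  norm_num only

theorem one_add_norm_sq_mul_japPow (s : ℝ) (x : E) :
    (1 + ‖x‖ ^ 2) * japPow s x = japPow (s + 2) x := by
  rw [japPow, japPow, add_div, div_self two_ne_zero, rpow_add (by positivity), rpow_one, mul_comm]

theorem japPow_le_japPow {s t : ℝ} (hst : s ≤ t) (x : E) : japPow s x ≤ japPow t x :=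
  rpow_le_rpow_of_exponent_le (one_le_one_add_norm_sq x) (by linarith)

theorem norm_le_japPow_one (x : E) : ‖x‖ ≤ japPow 1 x := by
  rw [japPow, ← sqrt_eq_rpow]
  exact le_sqrt_of_sq_le (by linarith)

theorem japPow_one_le (x : E) : japPow 1 x ≤ 1 + ‖x‖ := by
  rw [japPow, ← sqrt_eq_rpow]
  exact sqrt_le_iff.2 ⟨by positivity, by nlinarith [norm_nonneg x]⟩

theorem japPow_isBigO {s t : ℝ} (hst : s ≤ t) : (japPow s : E → ℝ) =O[⊤] (japPow t : E → ℝ) :=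
  .of_bound' <| .of_forall fun x => by
    rw [norm_of_nonneg (japPow_pos s x).le, norm_of_nonneg (japPow_pos t x).le]
    exact japPow_le_japPow hst x

variable [InnerProductSpace ℝ E]

theorem norm_japPow_smul_self_le (s : ℝ) (x : E) :
    ‖japPow s x • x‖ ≤ japPow (s + 1) x := by
  rw [norm_smul, norm_of_nonneg (japPow_pos s x).le, ← japPow_mul_japPow]
  exact mul_le_mul_of_nonneg_left (norm_le_japPow_one x) (japPow_pos s x).le

@[fun_prop]
theorem contDiff_japPow {k : WithTop ℕ∞} (s : ℝ) : ContDiff ℝ k (japPow s : E → ℝ) :=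
  (contDiff_const.add (contDiff_norm_sq ℝ)).rpow_const_of_ne fun x =>
    (zero_lt_one.trans_le (one_le_one_add_norm_sq x)).ne'

theorem differentiable_japPow (s : ℝ) : Differentiable ℝ (japPow s : E → ℝ) :=
  (contDiff_japPow s).differentiable one_ne_zero

theorem fderiv_japPow_apply (s : ℝ) (x ξ : E) :
    fderiv ℝ (japPow s) x ξ = s * japPow (s - 2) x * ⟪x, ξ⟫_ℝ := by
  have h : HasFDerivAt (fun y : E => 1 + ‖y‖ ^ 2) (2 • innerSL ℝ x) x :=
    (hasStrictFDerivAt_norm_sq x).hasFDerivAt.const_add 1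
  have h' := h.rpow_const (p := s / 2) (Or.inl (by positivity))
  rw [show fderiv ℝ (japPow s) x = _ from h'.fderiv]
  simp [japPow, sub_div]
  ring

theorem inner_fderiv_japPow_smul (s : ℝ) (x ξ : E) :
    ⟪fderiv ℝ (fun y : E => japPow s y • y) x ξ, ξ⟫_ℝ
      = japPow s x * ‖ξ‖ ^ 2 + s * japPow (s - 2) x * ⟪x, ξ⟫_ℝ ^ 2 := by
  rw [fderiv_fun_smul (differentiable_japPow s x) differentiableAt_fun_id]
  simp [fderiv_japPow_apply, inner_add_left, inner_smul_left]
  ring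

variable [FiniteDimensional ℝ E]

theorem gradient_japPow (s : ℝ) (x : E) : ∇ (japPow s) x = (s * japPow (s - 2) x) • x :=
  ext_inner_right ℝ fun ξ => by rw [inner_gradient_left, fderiv_japPow_apply, inner_smul_left]; rfl

theorem gradient_japPow_isBigO (s : ℝ) :
    ∇ (japPow s : E → ℝ) =O[⊤] (japPow (s - 1) : E → ℝ) := by
  refine .of_bound |s| <| .of_forall fun x => ?_
  have h := norm_japPow_smul_self_le (s - 2) x
  rw [gradient_japPow, mul_smul, norm_smul, norm_of_nonneg (japPow_pos (s - 1) x).le]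
  refine mul_le_mul_of_nonneg_left (h.trans_eq ?_) (abs_nonneg s)
  ring_nf

theorem divergence_japPow_smul (s : ℝ) (x : E) :
    divergence (fun y : E => japPow s y • y) x
      = (finrank ℝ E + s) * japPow s x - s * japPow (s - 2) x := by
  have h := one_add_norm_sq_mul_japPow (s - 2) x
  rw [divergence_smul (differentiable_japPow s x) differentiableAt_fun_id, gradient_japPow,
    inner_smul_left, real_inner_self_eq_norm_sq]
  rw [sub_add_cancel] at h
  simp [divergence]
  linear_combination s * h

theorem laplacian_japPow (s : ℝ) (x : E) :
    Δ (japPow s : E → ℝ) x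
      = s * ((finrank ℝ E + s - 2) * japPow (s - 2) x - (s - 2) * japPow (s - 4) x) := by
  have h : ∇ (japPow s : E → ℝ) = fun y : E => s • japPow (s - 2) y • y := by
    funext y
    rw [gradient_japPow, mul_smul]
  rw [laplacian_eq_divergence_gradient (contDiff_japPow s), h, divergence_const_smul,
    divergence_japPow_smul]
  · ring_nf
  · exact (differentiable_japPow _ x).fun_smul differentiableAt_fun_id

end JapanesePower

section Hardy

variable {E : Type*} [NormedAddCommGroup E] [InnerProductSpace ℝ E] [FiniteDimensional ℝ E]
  {f : E → ℝ}

theorem divergence_japPow_mul_sq_smul {x : E} (hf : DifferentiableAt ℝ f x) (s : ℝ) :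
    divergence (fun y => (f y ^ 2) • japPow s y • y) x
      = f x ^ 2 * ((finrank ℝ E + s) * japPow s x - s * japPow (s - 2) x)
        + 2 * f x * japPow s x * ⟪∇ f x, x⟫_ℝ := by
  rw [divergence_smul (hf.fun_pow 2) ((differentiable_japPow s x).fun_smul differentiableAt_fun_id),
    divergence_japPow_smul]
  simp [inner_smul_right, inner_gradient_left, fderiv_fun_pow 2 hf]
  ring

-- The square `‖∇ f + c f ⟨x⟩⁻² x‖ ^ 2` is nonnegative.
theorem hardy_pointwise (hd : 2 ≤ finrank ℝ E) {x : E} (hf : DifferentiableAt ℝ f x) :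
    ((finrank ℝ E - 2 : ℝ) / 2) ^ 2 * (japPow (-2) x * f x ^ 2) ≤ ‖∇ f x‖ ^ 2
      + (finrank ℝ E - 2 : ℝ) / 2 * divergence (fun y => (f y ^ 2) • japPow (-2) y • y) x := by
  rw [divergence_japPow_mul_sq_smul hf]
  have hc : (0 : ℝ) ≤ (finrank ℝ E - 2 : ℝ) / 2 := by
    have : (2 : ℝ) ≤ finrank ℝ E := by exact_mod_cast hd
    linarith
  set c := (finrank ℝ E - 2 : ℝ) / 2 with hc_def
  have hsq := sq_nonneg ‖∇ f x + (c * f x * japPow (-2) x) • x‖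
  rw [norm_add_sq_real, norm_smul, mul_pow, norm_eq_abs, sq_abs, inner_smul_right] at hsq
  have hdim : (finrank ℝ E : ℝ) = 2 * c + 2 := by rw [hc_def]; ring
  have hbracket : (1 + ‖x‖ ^ 2) * japPow (-2 - 2) x = japPow (-2) x := by
    rw [one_add_norm_sq_mul_japPow, sub_add_cancel]
  have hsquare : japPow (-2) x ^ 2 = japPow (-2 - 2) x := by
    rw [japPow_sq]; norm_num
  have hpos : 0 ≤ (2 * c + c ^ 2) * f x ^ 2 * japPow (-2 - 2) x := by
    have := japPow_pos (-2 - 2) x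
    positivity
  rw [hdim]
  linear_combination hsq + hpos + c ^ 2 * f x ^ 2 * ‖x‖ ^ 2 * hsquare + c ^ 2 * f x ^ 2 * hbracket

variable [MeasurableSpace E] [BorelSpace E]

theorem hardy_inequality (hd : 2 ≤ finrank ℝ E) (hf : ContDiff ℝ 1 f)
    (hs : HasCompactSupport f) :
    ((finrank ℝ E - 2 : ℝ) / 2) ^ 2 * ∫ x, japPow (-2) x * f x ^ 2 ≤ ∫ x, ‖∇ f x‖ ^ 2 := by
  have hsq : HasCompactSupport fun y => f y ^ 2 :=
    hs.comp_left (g := fun t : ℝ => t ^ 2) (by simp)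
  rw [← integral_const_mul]
  refine integral_le_of_le_add_divergence (Integrable.const_mul ?_ _) ?_ ?_ hsq.smul_right
    fun x => hardy_pointwise hd (hf.differentiable one_ne_zero x)
  · exact ((differentiable_japPow _).continuous.mul
      (hf.continuous.pow 2)).integrable_of_hasCompactSupport hsq.mul_left
  · exact ((contDiff_gradient (m := 0) hf le_rfl).continuous.norm.pow
      2).integrable_of_hasCompactSupport
        ((hasCompactSupport_gradient hs).mono fun x hx h0 => hx (by simp [h0]))
  · fun_prop

end Hardy

section Morawetz

variable {E : Type*} [NormedAddCommGroup E] [InnerProductSpace ℝ E] [FiniteDimensional ℝ E]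
  {X : E → E} {q f v : E → ℝ} {x : E}

/-- The first order operator `X · ∇ + q`, the multiplier of Morawetz's method. -/
def multiplier (X : E → E) (q f : E → ℝ) (x : E) : ℝ :=
  ⟪X x, ∇ f x⟫_ℝ + q x * f x

/-- The spatial part of the Morawetz current generated by `X · ∇ + q`, for a wave with value `f`
and velocity `v` at a fixed time. -/
def morawetzFlux (X : E → E) (q f v : E → ℝ) (x : E) : E :=
  -multiplier X q f x • ∇ f x + ((‖∇ f x‖ ^ 2 - v x ^ 2) / 2) • X x + (f x ^ 2 / 2) • ∇ q x

theorem contDiff_multiplier (hX : ContDiff ℝ 1 X) (hq : ContDiff ℝ 1 q) (hf : ContDiff ℝ 2 f) :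
    ContDiff ℝ 1 (multiplier X q f) :=
  (hX.inner ℝ (contDiff_gradient hf le_rfl)).add (hq.mul (hf.of_le one_le_two))

theorem contDiff_morawetzFlux (hX : ContDiff ℝ 1 X) (hq : ContDiff ℝ 2 q) (hf : ContDiff ℝ 2 f)
    (hv : ContDiff ℝ 1 v) : ContDiff ℝ 1 (morawetzFlux X q f v) := by
  have hgrad := contDiff_gradient (m := 1) hf le_rfl
  have hgradq := contDiff_gradient (m := 1) hq le_rfl
  have hM := contDiff_multiplier hX (hq.of_le one_le_two) hf
  have hf1 := hf.of_le one_le_two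
  exact ((hM.neg.smul hgrad).add ((((hgrad.norm_sq ℝ).sub (hv.pow 2)).div_const 2).smul hX)).add
    (((hf1.pow 2).div_const 2).smul hgradq)

theorem inner_gradient_multiplier (hX : DifferentiableAt ℝ X x) (hq : DifferentiableAt ℝ q x)
    (hf : ContDiff ℝ 2 f) (ξ : E) :
    ⟪∇ (multiplier X q f) x, ξ⟫_ℝ = ⟪fderiv ℝ X x ξ, ∇ f x⟫_ℝ + ⟪X x, fderiv ℝ (∇ f) x ξ⟫_ℝ
      + q x * ⟪∇ f x, ξ⟫_ℝ + f x * ⟪∇ q x, ξ⟫_ℝ := by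
  have hgrad := (contDiff_gradient (m := 1) hf le_rfl).differentiable one_ne_zero x
  have hf1 := hf.differentiable two_ne_zero x
  simp only [inner_gradient_left]
  unfold multiplier
  rw [fderiv_fun_add (hX.inner ℝ hgrad) (hq.fun_mul hf1), fderiv_fun_mul hq hf1]
  rw [add_apply, fderiv_inner_apply ℝ hX hgrad]
  simp only [add_apply, smul_apply, smul_eq_mul]
  ring

theorem inner_gradient_norm_sq_sub_sq (hf : ContDiff ℝ 2 f) (hv : DifferentiableAt ℝ v x) (ξ : E) :
    ⟪∇ (fun y => (‖∇ f y‖ ^ 2 - v y ^ 2) / 2) x, ξ⟫_ℝ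
      = ⟪fderiv ℝ (∇ f) x ξ, ∇ f x⟫_ℝ - v x * ⟪∇ v x, ξ⟫_ℝ := by
  have hgrad := (contDiff_gradient (m := 1) hf le_rfl).differentiable one_ne_zero x
  have h : HasFDerivAt (fun y => (‖∇ f y‖ ^ 2 - v y ^ 2) / 2) _ x :=
    (hgrad.hasFDerivAt.norm_sq.sub (hv.hasFDerivAt.pow 2)).mul_const (2⁻¹ : ℝ)
  rw [inner_gradient_left, h.fderiv, inner_gradient_left, real_inner_comm]
  simp
  ring

theorem inner_gradient_sq_div_two (hf : DifferentiableAt ℝ f x) (ξ : E) :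
    ⟪∇ (fun y => f y ^ 2 / 2) x, ξ⟫_ℝ = f x * ⟪∇ f x, ξ⟫_ℝ := by
  have h : HasFDerivAt (fun y => f y ^ 2 / 2) _ x := (hf.hasFDerivAt.pow 2).mul_const (2⁻¹ : ℝ)
  rw [inner_gradient_left, h.fderiv, inner_gradient_left]
  simp
  ring

theorem divergence_morawetzFlux (hX : ContDiff ℝ 1 X) (hq : ContDiff ℝ 2 q) (hf : ContDiff ℝ 2 f)
    (hv : ContDiff ℝ 1 v) (x : E) :
    divergence (morawetzFlux X q f v) x
      = -(multiplier X q f x * Δ f x + v x * multiplier X q v x)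
        - ⟪fderiv ℝ X x (∇ f x), ∇ f x⟫_ℝ
        + (‖∇ f x‖ ^ 2 - v x ^ 2) * (divergence X x / 2 - q x) + f x ^ 2 / 2 * Δ q x := by
  have hgrad := (contDiff_gradient (m := 1) hf le_rfl).differentiable one_ne_zero
  have hgradq := (contDiff_gradient (m := 1) hq le_rfl).differentiable one_ne_zero
  have hM := (contDiff_multiplier hX (hq.of_le one_le_two) hf).differentiable one_ne_zero
  have hX1 := hX.differentiable one_ne_zero
  have hv1 := hv.differentiable one_ne_zero
  have hf1 := hf.differentiable two_ne_zero
  have hL : DifferentiableAt ℝ (fun y => (‖∇ f y‖ ^ 2 - v y ^ 2) / 2) x :=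
    (((hgrad x).norm_sq ℝ).fun_sub ((hv1 x).fun_pow 2)).mul_const (2⁻¹ : ℝ)
  have hf2 : DifferentiableAt ℝ (fun y => f y ^ 2 / 2) x := ((hf1 x).fun_pow 2).mul_const (2⁻¹ : ℝ)
  have hM' : DifferentiableAt ℝ (fun y => -multiplier X q f y) x := (hM x).neg
  unfold morawetzFlux
  rw [divergence_add ((hM'.fun_smul (hgrad x)).fun_add (hL.fun_smul (hX1 x)))
      (hf2.fun_smul (hgradq x)),
    divergence_add (hM'.fun_smul (hgrad x)) (hL.fun_smul (hX1 x)),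
    divergence_smul hM' (hgrad x), divergence_smul hL (hX1 x), divergence_smul hf2 (hgradq x),
    laplacian_eq_divergence_gradient hf, laplacian_eq_divergence_gradient hq,
    inner_gradient_norm_sq_sub_sq hf (hv1 x)]
  rw [gradient_fun_neg, inner_neg_left, inner_gradient_sq_div_two (hf1 x),
    inner_gradient_multiplier (hX1 x) (hq.differentiable two_ne_zero x) hf]
  have hsymm := inner_fderiv_gradient_comm hf x (X x) (∇ f x)
  have hq_comm := real_inner_comm (∇ q x) (∇ f x)
  have hv_comm := real_inner_comm (∇ v x) (X x)
  have hself := real_inner_self_eq_norm_sq (∇ f x)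
  unfold multiplier
  linear_combination hsymm + f x * hq_comm + v x * hv_comm - q x * hself

/-- The density controlled by the multiplier `X · ∇ + q`, see `IsMorawetzMultiplier.bulk_le`. -/
def morawetzBulk (X : E → E) (q f v : E → ℝ) (x : E) : ℝ :=
  (divergence X x / 2 - q x) * (‖∇ f x‖ ^ 2 + v x ^ 2) - f x ^ 2 / 2 * Δ q x

/-- Pairs `(X, q)` for which the bulk density is dominated by the divergence identity of the
multiplier `X · ∇ + q`, with the decay that lets Hardy's inequality control the multiplier and its
flux by the energy. -/
structure IsMorawetzMultiplier (X : E → E) (q : E → ℝ) : Prop where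
  contDiff_field : ContDiff ℝ 1 X
  contDiff_coeff : ContDiff ℝ 2 q
  le_inner_fderiv (x ξ : E) : (divergence X x - 2 * q x) * ‖ξ‖ ^ 2 ≤ ⟪fderiv ℝ X x ξ, ξ⟫_ℝ
  field_isBigO : X =O[⊤] fun _ => (1 : ℝ)
  coeff_isBigO : q =O[⊤] japPow (-1)
  gradient_isBigO : ∇ q =O[⊤] japPow (-2)

namespace IsMorawetzMultiplier

theorem bulk_le (hm : IsMorawetzMultiplier X q) (hf : ContDiff ℝ 2 f) (hv : ContDiff ℝ 1 v)
    (x : E) :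
    multiplier X q f x * Δ f x + v x * multiplier X q v x + morawetzBulk X q f v x
      ≤ -divergence (morawetzFlux X q f v) x := by
  rw [divergence_morawetzFlux hm.contDiff_field hm.contDiff_coeff hf hv, morawetzBulk]
  linear_combination hm.le_inner_fderiv x (∇ f x)

theorem exists_bound (hm : IsMorawetzMultiplier X q) :
    ∃ B > 0, ∀ x, ‖X x‖ ≤ B ∧ |q x| ≤ B * japPow (-1) x ∧ ‖∇ q x‖ ≤ B * japPow (-2) x := by
  obtain ⟨B₁, hB₁, hX⟩ := hm.field_isBigO.exists_pos
  obtain ⟨B₂, hB₂, hq⟩ := hm.coeff_isBigO.exists_pos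
  obtain ⟨B₃, hB₃, hgrad⟩ := hm.gradient_isBigO.exists_pos
  have hpos (s : ℝ) (x : E) := (japPow_pos s x).le
  simp only [isBigOWith_top, norm_one, mul_one, norm_of_nonneg (hpos _ _)] at hX hq hgrad
  refine ⟨B₁ + B₂ + B₃, by positivity, fun x => ⟨?_, ?_, ?_⟩⟩
  · linarith [hX x]
  · exact (hq x).trans (mul_le_mul_of_nonneg_right (by linarith) (hpos _ x))
  · exact (hgrad x).trans (mul_le_mul_of_nonneg_right (by linarith) (hpos _ x))

end IsMorawetzMultiplier

/-- The energy density `v² + |∇f|²` of a wave with value `f` and velocity `v`, augmented by the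
Hardy term. -/
def hardyEnergy (f v : E → ℝ) (x : E) : ℝ :=
  v x ^ 2 + ‖∇ f x‖ ^ 2 + japPow (-2) x * f x ^ 2

theorem hardyEnergy_eq (f v : E → ℝ) (x : E) :
    hardyEnergy f v x = v x ^ 2 + ‖∇ f x‖ ^ 2 + (japPow (-1) x * |f x|) ^ 2 := by
  rw [hardyEnergy, japPow_neg_one_mul_abs_sq]

theorem abs_multiplier_le {B : ℝ} (hX : ‖X x‖ ≤ B) (hq : |q x| ≤ B * japPow (-1) x) :
    |multiplier X q f x| ≤ B * (‖∇ f x‖ + japPow (-1) x * |f x|) := by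
  calc |multiplier X q f x| ≤ ‖X x‖ * ‖∇ f x‖ + |q x| * |f x| := by
        rw [← abs_mul]
        exact (abs_add_le _ _).trans (add_le_add_left (abs_real_inner_le_norm _ _) _)
    _ ≤ B * ‖∇ f x‖ + B * japPow (-1) x * |f x| := by gcongr
    _ = B * (‖∇ f x‖ + japPow (-1) x * |f x|) := by ring

theorem multiplier_sq_le {B : ℝ} (hX : ‖X x‖ ≤ B) (hq : |q x| ≤ B * japPow (-1) x) :
    multiplier X q f x ^ 2 ≤ 2 * B ^ 2 * (‖∇ f x‖ ^ 2 + japPow (-2) x * f x ^ 2) := by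
  calc multiplier X q f x ^ 2 ≤ (B * (‖∇ f x‖ + japPow (-1) x * |f x|)) ^ 2 :=
        sq_le_sq.2 ((abs_multiplier_le hX hq).trans (le_abs_self _))
    _ ≤ 2 * B ^ 2 * (‖∇ f x‖ ^ 2 + (japPow (-1) x * |f x|) ^ 2) := by
        rw [mul_pow, mul_comm 2, mul_assoc]
        gcongr
        exact add_sq_le
    _ = 2 * B ^ 2 * (‖∇ f x‖ ^ 2 + japPow (-2) x * f x ^ 2) := by rw [japPow_neg_one_mul_abs_sq]

theorem abs_mul_multiplier_le {B : ℝ} (hX : ‖X x‖ ≤ B) (hq : |q x| ≤ B * japPow (-1) x) :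
    |v x * multiplier X q f x| ≤ B * hardyEnergy f v x := by
  have hB : 0 ≤ B := (norm_nonneg _).trans hX
  rw [hardyEnergy_eq, abs_mul, ← sq_abs (v x)]
  set a := ‖∇ f x‖
  set b := japPow (-1) x * |f x|
  calc |v x| * |multiplier X q f x| ≤ |v x| * (B * (a + b)) := by
        gcongr
        exact abs_multiplier_le hX hq
    _ = B * (|v x| * a + |v x| * b) := by ring
    _ ≤ B * (|v x| ^ 2 + a ^ 2 + b ^ 2) := by
        refine mul_le_mul_of_nonneg_left ?_ hB
        nlinarith [two_mul_le_add_sq |v x| a, two_mul_le_add_sq |v x| b]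

theorem norm_morawetzFlux_le {B : ℝ} (hX : ‖X x‖ ≤ B) (hq : |q x| ≤ B * japPow (-1) x)
    (hgrad : ‖∇ q x‖ ≤ B * japPow (-2) x) :
    ‖morawetzFlux X q f v x‖ ≤ 2 * B * hardyEnergy f v x := by
  have hB : 0 ≤ B := (norm_nonneg _).trans hX
  have hM := abs_multiplier_le hX hq (f := f)
  have hlagrangian : |(‖∇ f x‖ ^ 2 - v x ^ 2) / 2| ≤ (‖∇ f x‖ ^ 2 + v x ^ 2) / 2 := by
    rw [abs_le]
    constructor <;> linarith [sq_nonneg ‖∇ f x‖, sq_nonneg (v x)]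
  rw [hardyEnergy_eq]
  set a := ‖∇ f x‖
  set b := japPow (-1) x * |f x|
  calc ‖morawetzFlux X q f v x‖
      ≤ |multiplier X q f x| * a + |(a ^ 2 - v x ^ 2) / 2| * ‖X x‖ + f x ^ 2 / 2 * ‖∇ q x‖ := by
        refine (norm_add₃_le).trans_eq ?_
        rw [norm_smul, norm_smul, norm_smul, norm_neg, norm_eq_abs, norm_eq_abs, norm_eq_abs,
          abs_of_nonneg (a := f x ^ 2 / 2) (by positivity)]
    _ ≤ B * (a + b) * a + (a ^ 2 + v x ^ 2) / 2 * B + f x ^ 2 / 2 * (B * japPow (-2) x) := by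
        gcongr
    _ = B * (3 / 2 * a ^ 2 + a * b + v x ^ 2 / 2 + b ^ 2 / 2) := by
        rw [japPow_neg_one_mul_abs_sq]; ring
    _ ≤ B * (2 * (v x ^ 2 + a ^ 2 + b ^ 2)) := by
        refine mul_le_mul_of_nonneg_left ?_ hB
        nlinarith [two_mul_le_add_sq a b, sq_nonneg (v x), sq_nonneg b]
    _ = 2 * B * (v x ^ 2 + a ^ 2 + b ^ 2) := by ring

end Morawetz

section RadialMultiplier

variable {E : Type*} [NormedAddCommGroup E] [InnerProductSpace ℝ E]

/-- The zeroth order coefficient paired with the radial field `⟨x⟩ ^ s x`; it is chosen so that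
`divergence X - 2 q = (1 + s) ⟨x⟩ ^ s`. -/
def radialCoeff (s : ℝ) : E → ℝ :=
  ((finrank ℝ E - 1 : ℝ) / 2) • japPow s - (s / 2) • japPow (s - 2)

theorem contDiff_radialCoeff (s : ℝ) : ContDiff ℝ 2 (radialCoeff s : E → ℝ) :=
  ((contDiff_japPow s).const_smul ((finrank ℝ E - 1 : ℝ) / 2)).sub
    ((contDiff_japPow (s - 2)).const_smul (s / 2))

theorem radialCoeff_isBigO (s : ℝ) : (radialCoeff s : E → ℝ) =O[⊤] (japPow s : E → ℝ) :=
  ((isBigO_refl _ _).const_mul_left _).sub ((japPow_isBigO (by linarith)).const_mul_left _)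

theorem differentiable_japPow_smul_self (s : ℝ) :
    Differentiable ℝ (fun y : E => japPow s y • y) :=
  (differentiable_japPow s).fun_smul differentiable_fun_id

/-- The field `(K ⟨x⟩⁻¹ - ⟨x⟩ ^ (-1 - 2δ)) x`. The first summand alone makes `-Δ q` positive but
does not control the gradient, the second one supplies the missing `2δ ⟨x⟩ ^ (-1 - 2δ)`. -/
def localEnergyField (K δ : ℝ) (x : E) : E :=
  K • japPow (-1) x • x - japPow (-1 - 2 * δ) x • x

theorem localEnergyField_isBigO (K : ℝ) {δ : ℝ} (hδ : 0 < δ) :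
    (localEnergyField K δ : E → E) =O[⊤] fun _ => (1 : ℝ) := by
  have h {s : ℝ} (hs : s ≤ -1) : (fun y : E => japPow s y • y) =O[⊤] fun _ => (1 : ℝ) :=
    .of_bound' <| .of_forall fun x => by
      rw [norm_one, ← japPow_zero x]
      exact (norm_japPow_smul_self_le s x).trans (japPow_le_japPow (by linarith) x)
  exact ((h le_rfl).const_smul_left K).sub (h (by linarith))

theorem fderiv_localEnergyField (K δ : ℝ) (x : E) :
    fderiv ℝ (localEnergyField K δ : E → E) x = K • fderiv ℝ (fun y => japPow (-1) y • y) x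
      - fderiv ℝ (fun y => japPow (-1 - 2 * δ) y • y) x := by
  have h (t : ℝ) := differentiable_japPow_smul_self t x
  unfold localEnergyField
  rw [fderiv_fun_sub ((h _).fun_const_smul K) (h _), fderiv_fun_const_smul (h _)]

-- With `D = ‖x‖² ‖ξ‖² - ⟪x, ξ⟫² ≥ 0` and `s = -1 - 2δ`, the difference of the two sides is
-- `(K ⟨x⟩⁻³ - (1 + 2δ) ⟨x⟩ ^ (s - 2)) (‖ξ‖² + D)`.
theorem le_inner_fderiv_localEnergyField {K δ : ℝ} (hδ : 0 < δ) (hK : 1 + 2 * δ ≤ K) (x ξ : E) :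
    2 * δ * japPow (-1 - 2 * δ) x * ‖ξ‖ ^ 2 ≤ ⟪fderiv ℝ (localEnergyField K δ) x ξ, ξ⟫_ℝ := by
  have hpow : japPow (-1 - 2 * δ - 2) x ≤ japPow (-3) x := japPow_le_japPow (by linarith) x
  have hcoeff : 0 ≤ K * japPow (-3) x - (1 + 2 * δ) * japPow (-1 - 2 * δ - 2) x := by
    rw [sub_nonneg]
    exact mul_le_mul hK hpow (japPow_pos _ x).le (by linarith)
  have hCauchySchwarz : 0 ≤ ‖x‖ ^ 2 * ‖ξ‖ ^ 2 - ⟪x, ξ⟫_ℝ ^ 2 := by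
    rw [← mul_pow, sub_nonneg]
    exact sq_le_sq.2 ((abs_real_inner_le_norm x ξ).trans (le_abs_self _))
  have h₁ := one_add_norm_sq_mul_japPow (-3) x
  have h₂ := one_add_norm_sq_mul_japPow (-1 - 2 * δ - 2) x
  have hexp : (-3 + 2 : ℝ) = -1 := by norm_num
  have hexp' : (-1 - 2 : ℝ) = -3 := by norm_num
  rw [hexp] at h₁
  rw [sub_add_cancel] at h₂
  rw [fderiv_localEnergyField, sub_apply, smul_apply, inner_sub_left, real_inner_smul_left,
    inner_fderiv_japPow_smul, inner_fderiv_japPow_smul, hexp', ← h₁, ← h₂]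
  linear_combination mul_nonneg hcoeff (add_nonneg (sq_nonneg ‖ξ‖) hCauchySchwarz)

variable [FiniteDimensional ℝ E]

theorem divergence_sub_two_mul_radialCoeff (s : ℝ) (x : E) :
    divergence (fun y : E => japPow s y • y) x - 2 * radialCoeff s x = (1 + s) * japPow s x := by
  rw [divergence_japPow_smul, radialCoeff]
  simp only [Pi.sub_apply, Pi.smul_apply, smul_eq_mul]
  ring

theorem laplacian_radialCoeff (s : ℝ) (x : E) :
    Δ (radialCoeff s : E → ℝ) x
      = (finrank ℝ E - 1) / 2 * Δ (japPow s : E → ℝ) x - s / 2 * Δ (japPow (s - 2) : E → ℝ) x := by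
  have h (t : ℝ) : ContDiffAt ℝ 2 (japPow t : E → ℝ) x := (contDiff_japPow t).contDiffAt
  have h' (c t : ℝ) : ContDiffAt ℝ 2 (c • japPow t : E → ℝ) x := (h t).const_smul c
  rw [radialCoeff, (h' _ s).laplacian_sub (h' _ (s - 2)), laplacian_smul _ (h s),
    laplacian_smul _ (h (s - 2)), smul_eq_mul, smul_eq_mul]

theorem laplacian_radialCoeff_neg_one_le (hd : 4 ≤ finrank ℝ E) (x : E) :
    Δ (radialCoeff (-1) : E → ℝ) x ≤ -(3 / 2) * japPow (-3) x := by
  have hd' : (4 : ℝ) ≤ finrank ℝ E := by exact_mod_cast hd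
  have h3 := mul_nonneg (by nlinarith : (0 : ℝ) ≤ (finrank ℝ E - 1) * (finrank ℝ E - 3) - 3)
    (japPow_pos (-3) x).le
  have h5 := mul_nonneg (by linarith : (0 : ℝ) ≤ finrank ℝ E - 3) (japPow_pos (-5) x).le
  have h7 := japPow_pos (-7) x
  rw [laplacian_radialCoeff, laplacian_japPow, laplacian_japPow]
  norm_num only
  linarith

theorem laplacian_japPow_isBigO (s : ℝ) :
    (Δ (japPow s : E → ℝ)) =O[⊤] (japPow (s - 2) : E → ℝ) := by
  rw [funext (laplacian_japPow s)]
  exact (((isBigO_refl _ _).const_mul_left _).sub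
    ((japPow_isBigO (by linarith)).const_mul_left _)).const_mul_left _

theorem gradient_radialCoeff (s : ℝ) :
    ∇ (radialCoeff s : E → ℝ)
      = ((finrank ℝ E - 1 : ℝ) / 2) • ∇ (japPow s) - (s / 2) • ∇ (japPow (s - 2)) := by
  rw [radialCoeff, gradient_sub ((differentiable_japPow _).const_smul _)
    ((differentiable_japPow _).const_smul _), gradient_const_smul _ (differentiable_japPow _),
    gradient_const_smul _ (differentiable_japPow _)]

theorem gradient_radialCoeff_isBigO (s : ℝ) :
    ∇ (radialCoeff s : E → ℝ) =O[⊤] (japPow (s - 1) : E → ℝ) := by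
  rw [gradient_radialCoeff]
  exact ((gradient_japPow_isBigO s).const_smul_left _).sub
    (((gradient_japPow_isBigO (s - 2)).trans (japPow_isBigO (by linarith))).const_smul_left _)

theorem laplacian_radialCoeff_isBigO (s : ℝ) :
    Δ (radialCoeff s : E → ℝ) =O[⊤] (japPow (s - 2) : E → ℝ) := by
  rw [funext (laplacian_radialCoeff s)]
  exact ((laplacian_japPow_isBigO s).const_mul_left _).sub
    (((laplacian_japPow_isBigO (s - 2)).trans (japPow_isBigO (by linarith))).const_mul_left _)

/-- The zeroth order coefficient paired with `localEnergyField`. -/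
def localEnergyCoeff (K δ : ℝ) : E → ℝ :=
  K • radialCoeff (-1) - radialCoeff (-1 - 2 * δ)

theorem divergence_localEnergyField_sub (K δ : ℝ) (x : E) :
    divergence (localEnergyField K δ) x - 2 * localEnergyCoeff K δ x
      = 2 * δ * japPow (-1 - 2 * δ) x := by
  have h₁ := divergence_sub_two_mul_radialCoeff (-1) x
  have h₂ := divergence_sub_two_mul_radialCoeff (-1 - 2 * δ) x
  have hdiv : divergence (localEnergyField K δ) x = K * divergence (fun y => japPow (-1) y • y) x
      - divergence (fun y => japPow (-1 - 2 * δ) y • y) x := by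
    simp [divergence, fderiv_localEnergyField]
  rw [hdiv, localEnergyCoeff]
  simp only [Pi.sub_apply, Pi.smul_apply, smul_eq_mul]
  linear_combination K * h₁ - h₂

theorem isMorawetzMultiplier_localEnergy {K δ : ℝ} (hδ : 0 < δ) (hK : 1 + 2 * δ ≤ K) :
    IsMorawetzMultiplier (localEnergyField K δ : E → E) (localEnergyCoeff K δ) where
  contDiff_field := by
    unfold localEnergyField
    fun_prop
  contDiff_coeff := ((contDiff_radialCoeff _).const_smul K).sub (contDiff_radialCoeff _)
  le_inner_fderiv x ξ := by
    rw [divergence_localEnergyField_sub]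
    exact le_inner_fderiv_localEnergyField hδ hK x ξ
  field_isBigO := localEnergyField_isBigO K hδ
  coeff_isBigO := ((radialCoeff_isBigO _).const_mul_left K).sub
    ((radialCoeff_isBigO _).trans (japPow_isBigO (by linarith)))
  gradient_isBigO := by
    have hsmooth (s : ℝ) : Differentiable ℝ (radialCoeff s : E → ℝ) :=
      (contDiff_radialCoeff s).differentiable two_ne_zero
    rw [localEnergyCoeff, gradient_sub ((hsmooth _).const_smul K) (hsmooth _),
      gradient_const_smul K (hsmooth _)]
    refine IsBigO.sub (IsBigO.const_smul_left ?_ K) ?_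
    · exact (gradient_radialCoeff_isBigO _).trans (japPow_isBigO (by norm_num))
    · exact (gradient_radialCoeff_isBigO _).trans (japPow_isBigO (by linarith))

theorem exists_laplacian_localEnergyCoeff_le (hd : 4 ≤ finrank ℝ E) {δ : ℝ} (hδ : 0 < δ) :
    ∃ K, 1 + 2 * δ ≤ K ∧
      ∀ x : E, japPow (-3) x ≤ -Δ (localEnergyCoeff K δ : E → ℝ) x / 2 := by
  obtain ⟨C, hC, hbound⟩ := ((laplacian_radialCoeff_isBigO (E := E) (-1 - 2 * δ)).trans
    (japPow_isBigO (t := -3) (by linarith))).exists_pos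
  refine ⟨2 * C + 4 + 2 * δ, by linarith, fun x => ?_⟩
  have hpos := japPow_pos (-3) x
  have hgood := laplacian_radialCoeff_neg_one_le hd x
  have hbad : |Δ (radialCoeff (-1 - 2 * δ) : E → ℝ) x| ≤ C * japPow (-3) x := by
    simpa [norm_of_nonneg hpos.le] using isBigOWith_top.1 hbound x
  have hsmooth (s : ℝ) : ContDiffAt ℝ 2 (radialCoeff s : E → ℝ) x :=
    (contDiff_radialCoeff s).contDiffAt
  have hsmooth' (c s : ℝ) : ContDiffAt ℝ 2 (c • radialCoeff s : E → ℝ) x := (hsmooth s).const_smul c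
  rw [localEnergyCoeff, (hsmooth' _ _).laplacian_sub (hsmooth _),
    laplacian_smul _ (hsmooth _), smul_eq_mul]
  nlinarith [neg_abs_le (Δ (radialCoeff (-1 - 2 * δ) : E → ℝ) x)]

end RadialMultiplier

section SpaceTime

variable {E F : Type*} [NormedAddCommGroup E] [NormedAddCommGroup F] [NormedSpace ℝ F]

/-- The derivative in time of a function on space-time. -/
def timeDeriv (a : ℝ → E → F) (t : ℝ) (x : E) : F :=
  deriv (fun s => a s x) t

variable [NormedSpace ℝ E] {a : ℝ → E → F} {m k : WithTop ℕ∞}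

theorem contDiff_slice (ha : ContDiff ℝ k ↿a) (t : ℝ) : ContDiff ℝ k (a t) :=
  ha.comp (contDiff_prodMk_right t)

theorem hasDerivAt_fderiv_slice (ha : Differentiable ℝ ↿a) (t : ℝ) (x : E) :
    HasDerivAt (fun s => a s x) (fderiv ℝ ↿a (t, x) (1, 0)) t :=
  (ha (t, x)).hasFDerivAt.comp_hasDerivAt (f := fun s => (s, x)) t
    ((hasDerivAt_id t).prodMk (hasDerivAt_const t x))

theorem timeDeriv_eq_fderiv (ha : Differentiable ℝ ↿a) (t : ℝ) (x : E) :
    timeDeriv a t x = fderiv ℝ ↿a (t, x) (1, 0) :=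
  (hasDerivAt_fderiv_slice ha t x).deriv

theorem hasDerivAt_timeDeriv (ha : Differentiable ℝ ↿a) (t : ℝ) (x : E) :
    HasDerivAt (fun s => a s x) (timeDeriv a t x) t :=
  timeDeriv_eq_fderiv ha t x ▸ hasDerivAt_fderiv_slice ha t x

theorem contDiff_timeDeriv (ha : ContDiff ℝ k ↿a) (hm : m + 1 ≤ k) :
    ContDiff ℝ m ↿(timeDeriv a) := by
  have hdiff : Differentiable ℝ ↿a := ha.differentiable (by rintro rfl; simp at hm)
  have h : ↿(timeDeriv a) = fun p : ℝ × E => fderiv ℝ ↿a p (1, 0) :=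
    funext fun p => timeDeriv_eq_fderiv hdiff p.1 p.2
  rw [h]
  exact (ha.fderiv_right hm).clm_apply contDiff_const

theorem fderiv_slice (ha : Differentiable ℝ ↿a) (t : ℝ) (x : E) :
    fderiv ℝ (a t) x = (fderiv ℝ ↿a (t, x)).comp (.inr ℝ ℝ E) :=
  ((ha (t, x)).hasFDerivAt.comp x (hasFDerivAt_prodMk_right t x)).fderiv

theorem hasDerivAt_fderiv_slice_timeDeriv (ha : ContDiff ℝ 2 ↿a) (t : ℝ) (x : E) :
    HasDerivAt (fun s => fderiv ℝ (a s) x) (fderiv ℝ (timeDeriv a t) x) t := by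
  have hdiff := ha.differentiable two_ne_zero
  have hfderiv : Differentiable ℝ (fderiv ℝ ↿a) :=
    (ha.fderiv_right (m := 1) le_rfl).differentiable one_ne_zero
  have htime : ↿(timeDeriv a) = fun p : ℝ × E => fderiv ℝ ↿a p (1, 0) :=
    funext fun p => timeDeriv_eq_fderiv hdiff p.1 p.2
  have hpath : HasDerivAt (fun s => fderiv ℝ ↿a (s, x)) (fderiv ℝ (fderiv ℝ ↿a) (t, x) (1, 0)) t :=
    hasDerivAt_fderiv_slice (a := fun t x => fderiv ℝ ↿a (t, x)) hfderiv t x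
  have hcomm : fderiv ℝ (timeDeriv a t) x
      = (fderiv ℝ (fderiv ℝ ↿a) (t, x) (1, 0)).comp (.inr ℝ ℝ E) := by
    ext ξ
    rw [fderiv_slice ((contDiff_timeDeriv (m := 1) ha le_rfl).differentiable one_ne_zero), htime,
      fderiv_clm_apply (hfderiv _) (differentiableAt_const _)]
    simpa using (ha.contDiffAt (x := (t, x))).isSymmSndFDerivAt (by simp) (0, ξ) (1, 0)
  simp only [fderiv_slice hdiff, hcomm]
  simpa using hpath.clm_comp (hasDerivAt_const t (ContinuousLinearMap.inr ℝ ℝ E))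

theorem timeDeriv_fun_mul {a b : ℝ → E → ℝ} (ha : Differentiable ℝ ↿a) (hb : Differentiable ℝ ↿b)
    (t : ℝ) (x : E) :
    timeDeriv (fun t x => a t x * b t x) t x
      = timeDeriv a t x * b t x + a t x * timeDeriv b t x :=
  ((hasDerivAt_timeDeriv ha t x).mul (hasDerivAt_timeDeriv hb t x)).deriv

theorem timeDeriv_eq_zero_of_forall_eq_zero {τ : ℝ} (hτ : 0 < τ) (ha : Differentiable ℝ ↿a) {x : E}
    (hx : ∀ t ∈ Icc 0 τ, a t x = 0) {t : ℝ} (ht : t ∈ Icc 0 τ) : timeDeriv a t x = 0 :=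
  (uniqueDiffOn_Icc hτ t ht).eq_deriv _ (hasDerivAt_timeDeriv ha t x).hasDerivWithinAt
    ((hasDerivWithinAt_const t _ 0).congr hx (hx t ht))

end SpaceTime

section SpaceTimeGradient

variable {E : Type*} [NormedAddCommGroup E] [InnerProductSpace ℝ E] [FiniteDimensional ℝ E]
  {a : ℝ → E → ℝ} {m k : WithTop ℕ∞}

theorem contDiff_gradient_slice (ha : ContDiff ℝ k ↿a) (hm : m + 1 ≤ k) :
    ContDiff ℝ m ↿(fun t => ∇ (a t)) := by
  have hdiff : Differentiable ℝ ↿a := ha.differentiable (by rintro rfl; simp at hm)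
  have h : ↿(fun t => ∇ (a t))
      = fun p : ℝ × E => (toDual ℝ E).symm ((fderiv ℝ ↿a p).comp (.inr ℝ ℝ E)) :=
    funext fun p => congrArg (toDual ℝ E).symm (fderiv_slice hdiff p.1 p.2)
  rw [h]
  exact (toDual ℝ E).symm.contDiff.comp ((ha.fderiv_right hm).clm_comp contDiff_const)

theorem hasDerivAt_gradient_slice (ha : ContDiff ℝ 2 ↿a) (t : ℝ) (x : E) :
    HasDerivAt (fun s => ∇ (a s) x) (∇ (timeDeriv a t) x) t :=
  (toDual ℝ E).symm.toContinuousLinearEquiv.hasFDerivAt.comp_hasDerivAt t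
    (hasDerivAt_fderiv_slice_timeDeriv ha t x)

theorem continuous_laplacian_slice (ha : ContDiff ℝ 2 ↿a) : Continuous ↿fun t => Δ (a t) := by
  have hgrad := contDiff_gradient_slice (m := 1) ha le_rfl
  have h : ↿(fun t => Δ (a t)) = fun p : ℝ × E => LinearMap.trace ℝ E
      ((fderiv ℝ ↿(fun t => ∇ (a t)) p).comp (.inr ℝ ℝ E)) := by
    funext p
    rw [← fderiv_slice (hgrad.differentiable one_ne_zero)]
    exact laplacian_eq_divergence_gradient (contDiff_slice ha p.1) p.2
  rw [h]
  exact (LinearMap.continuous_of_finiteDimensional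
    (LinearMap.trace ℝ E ∘ₗ ContinuousLinearMap.coeLM ℝ)).comp
      ((hgrad.continuous_fderiv one_ne_zero).clm_comp continuous_const)

end SpaceTimeGradient

section Slab

variable {E : Type*} [NormedAddCommGroup E] [InnerProductSpace ℝ E] [FiniteDimensional ℝ E]
  [MeasurableSpace E] [BorelSpace E] {a g : ℝ → E → ℝ} {K : Set E} {τ : ℝ}

theorem integrable_slab (hK : IsCompact K) (hg : Continuous ↿g)
    (hgK : ∀ t x, t ∈ Icc 0 τ → x ∉ K → g t x = 0) :
    Integrable ↿g ((volume.restrict (Icc 0 τ)).prod volume) := by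
  have hslab : (volume.restrict (Icc 0 τ)).prod (volume : Measure E)
      = volume.restrict (Icc 0 τ ×ˢ univ) := by
    rw [Measure.volume_eq_prod, ← Measure.prod_restrict, Measure.restrict_univ]
  rw [hslab]
  have hcompact : IntegrableOn ↿g (Icc 0 τ ×ˢ K) :=
    hg.continuousOn.integrableOn_compact (isCompact_Icc.prod hK)
  refine hcompact.of_forall_sdiff_eq_zero (measurableSet_Icc.prod .univ) ?_
  rintro ⟨t, x⟩ ⟨⟨ht, -⟩, hx⟩
  exact hgK t x ht fun hxK => hx ⟨ht, hxK⟩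

theorem integrable_slice (hK : IsCompact K) (hg : Continuous ↿g)
    (hgK : ∀ t x, t ∈ Icc 0 τ → x ∉ K → g t x = 0) {t : ℝ} (ht : t ∈ Icc 0 τ) :
    Integrable (g t) :=
  (hg.comp (Continuous.prodMk_right t)).integrable_of_hasCompactSupport
    (.intro hK fun x hx => hgK t x ht hx)

theorem intervalIntegrable_integral_slice (hK : IsCompact K) (hτ : 0 ≤ τ) (hg : Continuous ↿g)
    (hgK : ∀ t x, t ∈ Icc 0 τ → x ∉ K → g t x = 0) :
    IntervalIntegrable (fun t => ∫ x, g t x) volume 0 τ :=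
  ContinuousOn.intervalIntegrable <| by
    rw [uIcc_of_le hτ]
    exact continuousOn_integral_of_compact_support hK hg.continuousOn hgK

theorem integral_sub_integral_eq_of_compact (hK : IsCompact K) (hτ : 0 < τ) (ha : ContDiff ℝ 1 ↿a)
    (haK : ∀ t x, t ∈ Icc 0 τ → x ∉ K → a t x = 0) :
    (∫ x, a τ x) - ∫ x, a 0 x = ∫ t in 0..τ, ∫ x, timeDeriv a t x := by
  have hdiff := ha.differentiable one_ne_zero
  have hderiv : Continuous ↿(timeDeriv a) := (contDiff_timeDeriv (m := 0) ha le_rfl).continuous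
  have hderivK (t x) (ht : t ∈ Icc 0 τ) (hx : x ∉ K) : timeDeriv a t x = 0 :=
    timeDeriv_eq_zero_of_forall_eq_zero hτ hdiff (fun s hs => haK s x hs hx) ht
  have hint : Integrable (Function.uncurry (timeDeriv a))
      ((volume.restrict (uIoc 0 τ)).prod volume) := by
    rw [uIoc_of_le hτ.le, restrict_Ioc_eq_restrict_Icc]
    exact integrable_slab hK hderiv hderivK
  rw [intervalIntegral_integral_swap hint, ← integral_sub
    (integrable_slice hK ha.continuous haK (right_mem_Icc.2 hτ.le))
    (integrable_slice hK ha.continuous haK (left_mem_Icc.2 hτ.le))]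
  refine integral_congr_ae (.of_forall fun x => ?_)
  refine (intervalIntegral.integral_eq_sub_of_hasDerivAt
    (fun t _ => hasDerivAt_timeDeriv hdiff t x) ?_).symm
  exact (hderiv.comp (Continuous.prodMk_left x)).intervalIntegrable _ _

theorem integral_le_add_of_timeDeriv_le (hK : IsCompact K) (hτ : 0 ≤ τ) {c : ℝ} {P : ℝ → E → E}
    (ha : ContDiff ℝ 1 ↿a) (hg : Continuous ↿g) (hP : ∀ t, ContDiff ℝ 1 (P t))
    (haK : ∀ t x, t ∈ Icc 0 τ → x ∉ K → a t x = 0) (hgK : ∀ t x, t ∈ Icc 0 τ → x ∉ K → g t x = 0)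
    (hPK : ∀ t x, t ∈ Icc 0 τ → x ∉ K → P t x = 0)
    (hle : ∀ t ∈ Icc 0 τ, ∀ x, timeDeriv a t x ≤ g t x + c * divergence (P t) x) :
    ∫ x, a τ x ≤ (∫ x, a 0 x) + ∫ t in 0..τ, ∫ x, g t x := by
  rcases hτ.eq_or_lt with rfl | hτ'
  · simp
  have hderiv : Continuous ↿(timeDeriv a) := (contDiff_timeDeriv (m := 0) ha le_rfl).continuous
  have hderivK (t x) (ht : t ∈ Icc 0 τ) (hx : x ∉ K) : timeDeriv a t x = 0 :=
    timeDeriv_eq_zero_of_forall_eq_zero hτ' (ha.differentiable one_ne_zero)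
      (fun s hs => haK s x hs hx) ht
  rw [← sub_le_iff_le_add', integral_sub_integral_eq_of_compact hK hτ' ha haK]
  refine intervalIntegral.integral_mono_on hτ
    (intervalIntegrable_integral_slice hK hτ hderiv hderivK)
    (intervalIntegrable_integral_slice hK hτ hg hgK) fun t ht => ?_
  exact integral_le_of_le_add_divergence (integrable_slice hK hderiv hderivK ht)
    (integrable_slice hK hg hgK ht) (hP t) (.intro hK fun x hx => hPK t x ht hx) (hle t ht)

end Slab

section Gronwall

theorem sqrt_le_add_integral_of_le {e φ : ℝ → ℝ} {T : ℝ} (he : ContinuousOn e (Icc 0 T))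
    (he0 : ∀ t ∈ Icc 0 T, 0 ≤ e t) (hφ : IntervalIntegrable φ volume 0 T)
    (hφ0 : ∀ t ∈ Icc 0 T, 0 ≤ φ t)
    (hle : ∀ τ ∈ Icc 0 T, e τ ≤ e 0 + 2 * ∫ t in 0..τ, √(e t) * φ t) {τ : ℝ} (hτ : τ ∈ Icc 0 T) :
    √(e τ) ≤ √(e 0) + 2 * ∫ t in 0..T, φ t := by
  have hT : 0 ≤ T := hτ.1.trans hτ.2
  obtain ⟨σ, hσ, hmax⟩ := isCompact_Icc.exists_isMaxOn ⟨τ, hτ⟩ he.sqrt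
  have hφσ : IntervalIntegrable φ volume 0 σ := hφ.mono_set <| by
    rw [uIcc_of_le hσ.1, uIcc_of_le hT]
    exact Icc_subset_Icc_right hσ.2
  have hmono : ∫ t in 0..σ, φ t ≤ ∫ t in 0..T, φ t :=
    intervalIntegral.integral_mono_interval le_rfl hσ.1 hσ.2
      ((ae_restrict_iff' measurableSet_Ioc).2 <| .of_forall fun t ht => hφ0 t ⟨ht.1.le, ht.2⟩) hφ
  have hforce : ∫ t in 0..σ, √(e t) * φ t ≤ √(e σ) * ∫ t in 0..T, φ t := by
    calc ∫ t in 0..σ, √(e t) * φ t ≤ ∫ t in 0..σ, √(e σ) * φ t := by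
          refine intervalIntegral.integral_mono_on hσ.1 ?_ (hφσ.const_mul _) fun t ht => ?_
          · refine hφσ.continuousOn_mul (he.sqrt.mono ?_)
            rw [uIcc_of_le hσ.1]
            exact Icc_subset_Icc_right hσ.2
          · have ht' : t ∈ Icc 0 T := ⟨ht.1, ht.2.trans hσ.2⟩
            exact mul_le_mul_of_nonneg_right (hmax ht') (hφ0 t ht')
      _ = √(e σ) * ∫ t in 0..σ, φ t := intervalIntegral.integral_const_mul _ _
      _ ≤ √(e σ) * ∫ t in 0..T, φ t := by gcongr
  have hI : 0 ≤ ∫ t in 0..T, φ t := intervalIntegral.integral_nonneg hT hφ0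
  refine (hmax hτ).trans ?_
  have hinit : √(e 0) ≤ √(e σ) := hmax (left_mem_Icc.2 hT)
  have h0 := he0 0 (left_mem_Icc.2 hT)
  by_contra! hlt
  have hsq : √(e σ) ^ 2 ≤ √(e 0) ^ 2 + 2 * (√(e σ) * ∫ t in 0..T, φ t) := by
    rw [sq_sqrt (he0 σ hσ), sq_sqrt h0]
    linarith [hle σ hσ]
  nlinarith [sqrt_nonneg (e 0), sqrt_nonneg (e σ)]

end Gronwall

section Cutoff

theorem deriv_smoothTransition_of_nonpos {s : ℝ} (hs : s ≤ 0) : deriv smoothTransition s = 0 :=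
  IsLocalMin.deriv_eq_zero <| .of_forall fun r => by
    rw [smoothTransition.zero_of_nonpos hs]
    exact smoothTransition.nonneg r

theorem deriv_smoothTransition_of_one_le {s : ℝ} (hs : 1 ≤ s) : deriv smoothTransition s = 0 :=
  IsLocalMax.deriv_eq_zero <| .of_forall fun r => by
    rw [smoothTransition.one_of_one_le hs]
    exact smoothTransition.le_one r

theorem exists_deriv_smoothTransition_le : ∃ κ > 0, ∀ s, deriv smoothTransition s ≤ κ := by
  obtain ⟨κ, hκ⟩ := (isCompact_Icc (a := (0 : ℝ)) (b := 1)).exists_bound_of_continuousOn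
    (smoothTransition.contDiff (n := 1).continuous_deriv le_rfl).continuousOn
  refine ⟨max κ 1, by positivity, fun s => ?_⟩
  rcases le_total s 0 with hs0 | hs0
  · simp [deriv_smoothTransition_of_nonpos hs0]
  rcases le_total s 1 with hs1 | hs1
  · exact (le_norm_self _).trans ((hκ s ⟨hs0, hs1⟩).trans (le_max_left _ _))
  · simp [deriv_smoothTransition_of_one_le hs1]

variable {E : Type*} [NormedAddCommGroup E] {R t : ℝ} {x : E}

/-- A smooth cutoff to the backward cone `t + ⟨x⟩ ≤ R`, supported in `t + ⟨x⟩ ≤ 2 R`. It decreases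
in time at least as fast as it varies in space, so that it only loses energy. -/
def coneCutoff (R t : ℝ) (x : E) : ℝ :=
  smoothTransition (2 - (t + japPow 1 x) / R)

theorem coneCutoff_nonneg (R t : ℝ) (x : E) : 0 ≤ coneCutoff R t x :=
  smoothTransition.nonneg _

theorem coneCutoff_le_one (R t : ℝ) (x : E) : coneCutoff R t x ≤ 1 :=
  smoothTransition.le_one _

theorem coneCutoff_eq_one (hR : 0 < R) (h : t + japPow 1 x ≤ R) : coneCutoff R t x = 1 := by
  refine smoothTransition.one_of_one_le ?_
  linarith [(div_le_one hR).2 h]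

theorem coneCutoff_eq_zero (hR : 0 < R) (ht : 0 ≤ t) (hx : x ∉ Metric.closedBall 0 (2 * R)) :
    coneCutoff R t x = 0 := by
  have hnorm : 2 * R < ‖x‖ := by simpa using hx
  refine smoothTransition.zero_of_nonpos ?_
  rw [sub_nonpos, le_div_iff₀ hR]
  linarith [norm_le_japPow_one x]

theorem hasCompactSupport_coneCutoff [ProperSpace E] (hR : 0 < R) (ht : 0 ≤ t) :
    HasCompactSupport (coneCutoff R t : E → ℝ) :=
  .intro (isCompact_closedBall 0 (2 * R)) fun _ hx => coneCutoff_eq_zero hR ht hx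

theorem eventually_coneCutoff_eq_one (t : ℝ) {s : Set E} (hs : Bornology.IsBounded s) :
    ∀ᶠ R in atTop, ∀ x ∈ s, coneCutoff R t x = 1 := by
  obtain ⟨ρ, hρ⟩ := hs.exists_norm_le
  filter_upwards [eventually_ge_atTop (t + (1 + ρ)), eventually_gt_atTop 0] with R hR hR0 x hx
  exact coneCutoff_eq_one hR0 (by linarith [japPow_one_le x, hρ x hx])

theorem timeDeriv_coneCutoff (R t : ℝ) (x : E) :
    timeDeriv (coneCutoff R) t x = -(deriv smoothTransition (2 - (t + japPow 1 x) / R) / R) := by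
  have hφ : HasDerivAt smoothTransition _ (2 - (t + japPow 1 x) / R) :=
    (smoothTransition.contDiff.differentiable one_ne_zero _).hasDerivAt
  have h : HasDerivAt (fun s => 2 - (s + japPow 1 x) / R) (-(1 / R)) t :=
    (((hasDerivAt_id t).add_const _).div_const R).const_sub 2
  exact ((hφ.comp t h).congr_deriv (by ring)).deriv

theorem exists_neg_timeDeriv_coneCutoff_le : ∃ κ > 0, ∀ R > 0, ∀ t (x : E),
    -timeDeriv (coneCutoff R) t x ≤ κ / R * coneCutoff (2 * R) t x := by
  obtain ⟨κ, hκ0, hκ⟩ := exists_deriv_smoothTransition_le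
  refine ⟨κ, hκ0, fun R hR t x => ?_⟩
  rw [timeDeriv_coneCutoff, neg_neg]
  rcases le_total (2 * R) (t + japPow 1 x) with hout | hin
  · have harg : 2 - (t + japPow 1 x) / R ≤ 0 := by
      rwa [sub_nonpos, le_div_iff₀ hR]
    rw [deriv_smoothTransition_of_nonpos harg, zero_div]
    exact mul_nonneg (by positivity) (coneCutoff_nonneg _ _ _)
  · rw [coneCutoff_eq_one (by positivity) hin, mul_one]
    gcongr
    exact hκ _

variable [InnerProductSpace ℝ E]

theorem contDiff_coneCutoff (R : ℝ) {k : ℕ∞} : ContDiff ℝ k ↿(coneCutoff R : ℝ → E → ℝ) :=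
  smoothTransition.contDiff.comp <| contDiff_const.sub <|
    (contDiff_fst.add ((contDiff_japPow 1).comp contDiff_snd)).div_const R

variable [CompleteSpace E]

theorem gradient_coneCutoff (R t : ℝ) (x : E) :
    ∇ (coneCutoff R t) x = timeDeriv (coneCutoff R) t x • japPow (-1) x • x := by
  have hφ : HasDerivAt smoothTransition _ (2 - (t + japPow 1 x) / R) :=
    (smoothTransition.contDiff.differentiable one_ne_zero _).hasDerivAt
  have h : HasFDerivAt (fun y : E => 2 - (t + japPow 1 y) / R) _ x :=
    (((differentiable_japPow 1 x).hasFDerivAt.const_add t).mul_const R⁻¹).const_sub 2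
  refine ext_inner_right ℝ fun ξ => ?_
  rw [inner_gradient_left,
    show fderiv ℝ (coneCutoff R t) x = _ from (hφ.comp_hasFDerivAt x h).fderiv,
    timeDeriv_coneCutoff, inner_smul_left, inner_smul_left, smul_apply, neg_apply, smul_apply,
    fderiv_japPow_apply]
  norm_num [smul_eq_mul]
  ring

theorem norm_gradient_coneCutoff_le (hR : 0 < R) (t : ℝ) (x : E) :
    ‖∇ (coneCutoff R t) x‖ ≤ -timeDeriv (coneCutoff R) t x := by
  have hdecr : 0 ≤ -timeDeriv (coneCutoff R) t x := by
    rw [timeDeriv_coneCutoff, neg_neg]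
    exact div_nonneg smoothTransition.monotone.deriv_nonneg hR.le
  have hunit : ‖japPow (-1) x • x‖ ≤ 1 := by simpa using norm_japPow_smul_self_le (-1) x
  rw [gradient_coneCutoff, norm_smul, ← norm_neg, norm_of_nonneg hdecr]
  exact mul_le_of_le_one_right hdecr hunit

end Cutoff

section WeightedNorm

variable {X : Type*} [MeasurableSpace X] {μ : Measure X}

/-- The `L²` seminorm of `f` with respect to the weight `χ`. -/
def weightedNorm (χ f : X → ℝ) (μ : Measure X) : ℝ :=
  √(∫ x, χ x * f x ^ 2 ∂μ)

variable [TopologicalSpace X] [OpensMeasurableSpace X] [IsFiniteMeasureOnCompacts μ]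
  {χ f g : X → ℝ}

theorem memLp_sqrt_mul (hχ : Continuous χ) (hχs : HasCompactSupport χ) (hf : Continuous f)
    (p : ℝ≥0∞) : MemLp (fun x => √(χ x) * f x) p μ :=
  Continuous.memLp_of_hasCompactSupport (by fun_prop) <|
    hχs.mono fun x hx h0 => hx (by simp [h0])

theorem ofReal_weightedNorm (hχ : Continuous χ) (hχs : HasCompactSupport χ) (hχ0 : ∀ x, 0 ≤ χ x)
    (hf : Continuous f) :
    ENNReal.ofReal (weightedNorm χ f μ) = eLpNorm (fun x => √(χ x) * f x) 2 μ := by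
  rw [(memLp_sqrt_mul hχ hχs hf 2).eLpNorm_eq_integral_rpow_norm two_ne_zero ENNReal.ofNat_ne_top,
    weightedNorm, sqrt_eq_rpow]
  simp [mul_pow, hχ0]

theorem integral_mul_mul_le_weightedNorm_mul (hχ : Continuous χ) (hχs : HasCompactSupport χ)
    (hχ0 : ∀ x, 0 ≤ χ x) (hf : Continuous f) (hg : Continuous g) :
    ∫ x, χ x * (f x * g x) ∂μ ≤ weightedNorm χ f μ * weightedNorm χ g μ := by
  have hsqrt (x : X) : √(χ x) ^ 2 = χ x := sq_sqrt (hχ0 x)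
  calc ∫ x, χ x * (f x * g x) ∂μ ≤ ∫ x, ‖χ x * (f x * g x)‖ ∂μ :=
        (le_norm_self _).trans (norm_integral_le_integral_norm _)
    _ = ∫ x, ‖√(χ x) * f x‖ * ‖√(χ x) * g x‖ ∂μ := by
        refine integral_congr_ae (.of_forall fun x => ?_)
        beta_reduce
        rw [← norm_mul, mul_mul_mul_comm, ← sq, hsqrt]
    _ ≤ weightedNorm χ f μ * weightedNorm χ g μ := by
        have h := integral_mul_norm_le_Lp_mul_Lq (μ := μ) .two_two
          (memLp_sqrt_mul hχ hχs hf _) (memLp_sqrt_mul hχ hχs hg _)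
        simpa only [weightedNorm, ← sqrt_eq_rpow, rpow_two, norm_eq_abs, sq_abs, mul_pow,
          hsqrt] using h

theorem ofReal_weightedNorm_le_eLpNorm (hχ : Continuous χ) (hχs : HasCompactSupport χ)
    (hχ0 : ∀ x, 0 ≤ χ x) (hχ1 : ∀ x, χ x ≤ 1) (hf : Continuous f) :
    ENNReal.ofReal (weightedNorm χ f μ) ≤ eLpNorm f 2 μ := by
  rw [ofReal_weightedNorm hχ hχs hχ0 hf]
  refine eLpNorm_mono fun x => ?_
  rw [norm_mul, norm_of_nonneg (sqrt_nonneg _)]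
  exact mul_le_of_le_one_left (norm_nonneg _) (sqrt_le_one.2 (hχ1 x))

end WeightedNorm

section Energy

variable {E : Type*} [NormedAddCommGroup E] [InnerProductSpace ℝ E] [FiniteDimensional ℝ E]
  {w : ℝ → E → ℝ} {R T t : ℝ}

/-- The d'Alembertian `∂ₜ² - Δ`. -/
def waveOp (w : ℝ → E → ℝ) (t : ℝ) (x : E) : ℝ :=
  timeDeriv (timeDeriv w) t x - Δ (w t) x

/-- The squared length `(∂ₜ w)² + |∇ w|²` of the space-time gradient. -/
def energyDensity (w : ℝ → E → ℝ) (t : ℝ) (x : E) : ℝ :=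
  timeDeriv w t x ^ 2 + ‖∇ (w t) x‖ ^ 2

theorem energyDensity_nonneg (w : ℝ → E → ℝ) (t : ℝ) (x : E) : 0 ≤ energyDensity w t x := by
  unfold energyDensity
  positivity

theorem continuous_waveOp (hw : ContDiff ℝ 2 ↿w) : Continuous ↿(waveOp w) :=
  (contDiff_timeDeriv (m := 0) (contDiff_timeDeriv (m := 1) hw le_rfl) le_rfl).continuous.sub
    (continuous_laplacian_slice hw)

theorem contDiff_energyDensity (hw : ContDiff ℝ 2 ↿w) : ContDiff ℝ 1 ↿(energyDensity w) :=
  ((contDiff_timeDeriv (m := 1) hw le_rfl).pow 2).add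
    ((contDiff_gradient_slice (m := 1) hw le_rfl).norm_sq ℝ)

theorem timeDeriv_energyDensity (hw : ContDiff ℝ 2 ↿w) (t : ℝ) (x : E) :
    timeDeriv (energyDensity w) t x = 2 * (timeDeriv w t x * timeDeriv (timeDeriv w) t x
      + ⟪∇ (timeDeriv w t) x, ∇ (w t) x⟫_ℝ) := by
  have hv := (contDiff_timeDeriv (m := 1) hw le_rfl).differentiable one_ne_zero
  have h : HasDerivAt (fun s => energyDensity w s x) _ t :=
    ((hasDerivAt_timeDeriv hv t x).pow 2).add (hasDerivAt_gradient_slice hw t x).norm_sq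
  have hcomm := real_inner_comm (∇ (timeDeriv w t) x) (∇ (w t) x)
  rw [timeDeriv, h.deriv]
  push_cast
  linear_combination 2 * hcomm

theorem timeDeriv_coneCutoff_mul_energyDensity_le (hw : ContDiff ℝ 2 ↿w) (hR : 0 < R) (t : ℝ)
    (x : E) :
    timeDeriv (fun t x => coneCutoff R t x * energyDensity w t x) t x
      ≤ 2 * (coneCutoff R t x * (timeDeriv w t x * waveOp w t x))
        + 2 * divergence (fun y => coneCutoff R t y • timeDeriv w t y • ∇ (w t) y) x := by
  have hχ := contDiff_coneCutoff (E := E) R (k := 1)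
  have hχt := (contDiff_slice hχ t).differentiable one_ne_zero x
  have hvt := (contDiff_slice (contDiff_timeDeriv (m := 1) hw le_rfl) t).differentiable
    one_ne_zero x
  have hwt := contDiff_slice hw t
  have hgrad := (contDiff_gradient (m := 1) hwt le_rfl).differentiable one_ne_zero x
  have hflux : |timeDeriv w t x * ⟪∇ (coneCutoff R t) x, ∇ (w t) x⟫_ℝ|
      ≤ -timeDeriv (coneCutoff R) t x * (|timeDeriv w t x| * ‖∇ (w t) x‖) := by
    rw [abs_mul, mul_left_comm]
    refine mul_le_mul_of_nonneg_left ((abs_real_inner_le_norm _ _).trans ?_) (abs_nonneg _)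
    exact mul_le_mul_of_nonneg_right (norm_gradient_coneCutoff_le hR t x) (norm_nonneg _)
  have hamgm : |timeDeriv w t x| * ‖∇ (w t) x‖ ≤ energyDensity w t x / 2 := by
    rw [energyDensity, ← sq_abs (timeDeriv w t x)]
    linarith [two_mul_le_add_sq |timeDeriv w t x| ‖∇ (w t) x‖]
  have hloss := mul_le_mul_of_nonneg_left hamgm
    ((norm_nonneg _).trans (norm_gradient_coneCutoff_le hR t x))
  rw [timeDeriv_fun_mul (hχ.differentiable one_ne_zero)
      ((contDiff_energyDensity hw).differentiable one_ne_zero),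
    timeDeriv_energyDensity hw, divergence_smul hχt (hvt.fun_smul hgrad),
    divergence_smul hvt hgrad, ← laplacian_eq_divergence_gradient hwt, inner_smul_right, waveOp]
  linarith [neg_abs_le (timeDeriv w t x * ⟪∇ (coneCutoff R t) x, ∇ (w t) x⟫_ℝ)]

variable [MeasurableSpace E] [BorelSpace E]

theorem integral_coneCutoff_mul_energyDensity_le (hw : ContDiff ℝ 2 ↿w) (hR : 0 < R)
    (hT : 0 ≤ T) :
    ∫ x, coneCutoff R T x * energyDensity w T x ≤ (∫ x, coneCutoff R 0 x * energyDensity w 0 x)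
      + ∫ t in 0..T, ∫ x, 2 * (coneCutoff R t x * (timeDeriv w t x * waveOp w t x)) := by
  have hv := contDiff_timeDeriv (m := 1) hw le_rfl
  have hχ (t : ℝ) (x : E) (ht : t ∈ Icc 0 T) (hx : x ∉ Metric.closedBall 0 (2 * R)) :
      coneCutoff R t x = 0 := coneCutoff_eq_zero hR ht.1 hx
  refine integral_le_add_of_timeDeriv_le (isCompact_closedBall 0 (2 * R)) hT (c := 2)
    (P := fun t x => coneCutoff R t x • timeDeriv w t x • ∇ (w t) x)
    ((contDiff_coneCutoff R (k := 1)).mul (contDiff_energyDensity hw))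
    (continuous_const.mul ((contDiff_coneCutoff R (k := 0)).continuous.mul
      (hv.continuous.mul (continuous_waveOp hw))))
    (fun t => (contDiff_slice (contDiff_coneCutoff R (k := 1)) t).smul
      ((contDiff_slice hv t).smul (contDiff_gradient (contDiff_slice hw t) le_rfl)))
    (fun t x ht hx => ?_) (fun t x ht hx => ?_) (fun t x ht hx => ?_)
    fun t _ x => timeDeriv_coneCutoff_mul_energyDensity_le hw hR t x
  all_goals simp [hχ t x ht hx]

theorem continuousOn_integral_coneCutoff_mul {g : ℝ → E → ℝ} (hg : Continuous ↿g) (hR : 0 < R)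
    (T : ℝ) : ContinuousOn (fun t => ∫ x, coneCutoff R t x * g t x) (Icc 0 T) :=
  continuousOn_integral_of_compact_support (isCompact_closedBall 0 (2 * R))
    ((contDiff_coneCutoff R (k := 0)).continuous.mul hg).continuousOn
    fun t x ht hx => by simp [coneCutoff_eq_zero hR ht.1 hx]

theorem continuousOn_weightedNorm_coneCutoff {g : ℝ → E → ℝ} (hg : Continuous ↿g) (hR : 0 < R)
    (T : ℝ) : ContinuousOn (fun t => weightedNorm (coneCutoff R t) (g t) volume) (Icc 0 T) :=
  (continuousOn_integral_coneCutoff_mul (g := fun t x => g t x ^ 2) (hg.pow 2) hR T).sqrt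

theorem integrable_coneCutoff_mul {g : E → ℝ} (hg : Continuous g) (hR : 0 < R) (ht : 0 ≤ t) :
    Integrable fun x => coneCutoff R t x * g x :=
  ((contDiff_slice (contDiff_coneCutoff R (k := 0)) t).continuous.mul
    hg).integrable_of_hasCompactSupport (hasCompactSupport_coneCutoff hR ht).mul_right

theorem integrable_coneCutoff_mul_slab {g : ℝ → E → ℝ} (hg : Continuous ↿g) (hR : 0 < R) (T : ℝ) :
    Integrable (fun z : ℝ × E => coneCutoff R z.1 z.2 * g z.1 z.2)
      ((volume.restrict (Icc 0 T)).prod volume) :=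
  integrable_slab (g := fun t x => coneCutoff R t x * g t x) (isCompact_closedBall 0 (2 * R))
    ((contDiff_coneCutoff R (k := 0)).continuous.mul hg)
    fun t x ht hx => by simp [coneCutoff_eq_zero hR ht.1 hx]

/-- The right hand side of the energy inequality, truncated to a backward cone. -/
def truncatedData (w : ℝ → E → ℝ) (R T : ℝ) : ℝ :=
  √(∫ x, coneCutoff R 0 x * energyDensity w 0 x)
    + ∫ t in 0..T, weightedNorm (coneCutoff R t) (waveOp w t) volume

theorem weightedNorm_timeDeriv_le (hw : ContDiff ℝ 2 ↿w) (hR : 0 < R) (ht : 0 ≤ t) :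
    weightedNorm (coneCutoff R t) (timeDeriv w t) volume
      ≤ √(∫ x, coneCutoff R t x * energyDensity w t x) := by
  have hv := (contDiff_slice (contDiff_timeDeriv (m := 1) hw le_rfl) t).continuous
  have he := (contDiff_slice (contDiff_energyDensity hw) t).continuous
  refine sqrt_le_sqrt <| integral_mono (integrable_coneCutoff_mul (hv.pow 2) hR ht)
    (integrable_coneCutoff_mul he hR ht) fun x => ?_
  exact mul_le_mul_of_nonneg_left (le_add_of_nonneg_right (sq_nonneg _)) (coneCutoff_nonneg R t x)

theorem sqrt_integral_coneCutoff_mul_energyDensity_le (hw : ContDiff ℝ 2 ↿w) (hR : 0 < R)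
    (ht : t ∈ Icc 0 T) :
    √(∫ x, coneCutoff R t x * energyDensity w t x) ≤ 2 * truncatedData w R T := by
  have hT : 0 ≤ T := ht.1.trans ht.2
  have hF := continuous_waveOp hw
  have hv := (contDiff_timeDeriv (m := 1) hw le_rfl).continuous
  have he := continuousOn_integral_coneCutoff_mul (contDiff_energyDensity hw).continuous hR T
  have hφ := continuousOn_weightedNorm_coneCutoff hF hR T
  have hGronwall := sqrt_le_add_integral_of_le he
    (fun t _ => integral_nonneg fun x =>
      mul_nonneg (coneCutoff_nonneg R t x) (energyDensity_nonneg w t x))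
    (hφ.intervalIntegrable_of_Icc hT) (fun t _ => sqrt_nonneg _) (fun τ hτ => ?_) ht
  · refine hGronwall.trans ?_
    rw [truncatedData]
    linarith [sqrt_nonneg (∫ x, coneCutoff R 0 x * energyDensity w 0 x)]
  refine (integral_coneCutoff_mul_energyDensity_le hw hR hτ.1).trans ?_
  have hsub : Icc 0 τ ⊆ Icc 0 T := Icc_subset_Icc_right hτ.2
  simp only [integral_const_mul]
  rw [intervalIntegral.integral_const_mul]
  gcongr
  refine intervalIntegral.integral_mono_on hτ.1
    ((continuousOn_integral_coneCutoff_mul (hv.mul hF) hR τ).intervalIntegrable_of_Icc hτ.1)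
    (((he.sqrt.mul hφ).mono hsub).intervalIntegrable_of_Icc hτ.1) fun t ht => ?_
  refine (integral_mul_mul_le_weightedNorm_mul
    (contDiff_slice (contDiff_coneCutoff R (k := 0)) t).continuous
    (hasCompactSupport_coneCutoff hR ht.1) (coneCutoff_nonneg R t)
    (hv.comp (Continuous.prodMk_right t)) (hF.comp (Continuous.prodMk_right t))).trans ?_
  exact mul_le_mul_of_nonneg_right (weightedNorm_timeDeriv_le hw hR ht.1) (sqrt_nonneg _)

theorem integral_coneCutoff_mul_energyDensity_le_sq (hw : ContDiff ℝ 2 ↿w) (hR : 0 < R)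
    (ht : t ∈ Icc 0 T) {A : ℝ} (hA : truncatedData w R T ≤ A) :
    ∫ x, coneCutoff R t x * energyDensity w t x ≤ (2 * A) ^ 2 :=
  (sqrt_le_iff.1 ((sqrt_integral_coneCutoff_mul_energyDensity_le hw hR ht).trans
    (mul_le_mul_of_nonneg_left hA zero_le_two))).2

end Energy

section HardyEnergy

variable {E : Type*} [NormedAddCommGroup E] [InnerProductSpace ℝ E] [FiniteDimensional ℝ E]
  [MeasurableSpace E] [BorelSpace E] {w : ℝ → E → ℝ} {R T t A : ℝ}

theorem integral_norm_gradient_sq_le (hw : ContDiff ℝ 2 ↿w) (ht : t ∈ Icc 0 T)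
    (hs : HasCompactSupport (w t)) (hA : ∀ R > 0, truncatedData w R T ≤ A) :
    ∫ x, ‖∇ (w t) x‖ ^ 2 ≤ 4 * A ^ 2 := by
  have hgrad := (contDiff_gradient (m := 1) (contDiff_slice hw t) le_rfl).continuous
  have he := (contDiff_slice (contDiff_energyDensity hw) t).continuous
  obtain ⟨R, hone, hR⟩ := ((eventually_coneCutoff_eq_one t
    (hasCompactSupport_gradient hs).isCompact.isBounded).and (eventually_gt_atTop 0)).exists
  calc ∫ x, ‖∇ (w t) x‖ ^ 2 = ∫ x, coneCutoff R t x * ‖∇ (w t) x‖ ^ 2 := by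
        refine integral_congr_ae (.of_forall fun x => ?_)
        by_cases hx : x ∈ tsupport (∇ (w t))
        · simp only [hone x hx, one_mul]
        · simp only [image_eq_zero_of_notMem_tsupport hx, norm_zero, zero_pow two_ne_zero, mul_zero]
    _ ≤ ∫ x, coneCutoff R t x * energyDensity w t x := by
        refine integral_mono (integrable_coneCutoff_mul (hgrad.norm.pow 2) hR ht.1)
          (integrable_coneCutoff_mul he hR ht.1) fun x => ?_
        exact mul_le_mul_of_nonneg_left (le_add_of_nonneg_left (sq_nonneg _))
          (coneCutoff_nonneg R t x)
    _ ≤ (2 * A) ^ 2 := integral_coneCutoff_mul_energyDensity_le_sq hw hR ht (hA R hR)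
    _ = 4 * A ^ 2 := by ring

theorem integral_japPow_mul_sq_le (hd : 4 ≤ finrank ℝ E) {f : E → ℝ} (hf : ContDiff ℝ 1 f)
    (hs : HasCompactSupport f) : ∫ x, japPow (-2) x * f x ^ 2 ≤ ∫ x, ‖∇ f x‖ ^ 2 := by
  have hd' : (4 : ℝ) ≤ finrank ℝ E := mod_cast hd
  refine le_trans ?_ (hardy_inequality (by omega) hf hs)
  refine le_mul_of_one_le_left (integral_nonneg fun x => ?_) (one_le_pow₀ (by linarith))
  exact mul_nonneg (japPow_pos _ x).le (sq_nonneg _)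

theorem integral_coneCutoff_mul_hardyEnergy_le (hd : 4 ≤ finrank ℝ E) (hw : ContDiff ℝ 2 ↿w)
    (hR : 0 < R) (ht : t ∈ Icc 0 T) (hs : HasCompactSupport (w t))
    (hA : ∀ R > 0, truncatedData w R T ≤ A) :
    ∫ x, coneCutoff R t x * hardyEnergy (w t) (timeDeriv w t) x ≤ 8 * A ^ 2 := by
  have hwt := contDiff_slice hw t
  have he := (contDiff_slice (contDiff_energyDensity hw) t).continuous
  have hlower : Continuous fun x => japPow (-2) x * w t x ^ 2 :=
    (contDiff_japPow (k := 0) (-2)).continuous.mul (hwt.continuous.pow 2)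
  have henergy := integral_coneCutoff_mul_energyDensity_le_sq hw hR ht (hA R hR)
  have hhardy : ∫ x, coneCutoff R t x * (japPow (-2) x * w t x ^ 2) ≤ 4 * A ^ 2 := by
    refine le_trans ?_ ((integral_japPow_mul_sq_le hd (hwt.of_le one_le_two) hs).trans
      (integral_norm_gradient_sq_le hw ht hs hA))
    refine integral_mono (integrable_coneCutoff_mul hlower hR ht.1)
      (hlower.integrable_of_hasCompactSupport <| hs.mono fun x hx h0 => hx (by simp [h0]))
      fun x => ?_
    exact mul_le_of_le_one_left (mul_nonneg (japPow_pos _ x).le (sq_nonneg _))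
      (coneCutoff_le_one R t x)
  calc ∫ x, coneCutoff R t x * hardyEnergy (w t) (timeDeriv w t) x
      = (∫ x, coneCutoff R t x * energyDensity w t x)
        + ∫ x, coneCutoff R t x * (japPow (-2) x * w t x ^ 2) := by
        rw [← integral_add (integrable_coneCutoff_mul he hR ht.1)
          (integrable_coneCutoff_mul hlower hR ht.1)]
        simp only [← mul_add]
        rfl
    _ ≤ 8 * A ^ 2 := by linarith

end HardyEnergy

section LocalEnergyDecay

variable {E : Type*} [NormedAddCommGroup E] [InnerProductSpace ℝ E] [FiniteDimensional ℝ E]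
  {X : E → E} {q : E → ℝ} {w : ℝ → E → ℝ} {R T t A B κ : ℝ} {x : E}

theorem contDiff_multiplier_slice (hX : ContDiff ℝ 1 X) (hq : ContDiff ℝ 1 q)
    (hw : ContDiff ℝ 2 ↿w) : ContDiff ℝ 1 ↿(fun t => multiplier X q (w t)) :=
  ((hX.comp contDiff_snd).inner ℝ (contDiff_gradient_slice hw le_rfl)).add
    ((hq.comp contDiff_snd).mul (hw.of_le one_le_two))

theorem timeDeriv_multiplier (hw : ContDiff ℝ 2 ↿w) (t : ℝ) (x : E) :
    timeDeriv (fun t => multiplier X q (w t)) t x = multiplier X q (timeDeriv w t) x := by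
  have h : HasDerivAt (fun s => multiplier X q (w s) x) _ t :=
    ((hasDerivAt_const t (X x)).inner ℝ (hasDerivAt_gradient_slice hw t x)).add
      ((hasDerivAt_timeDeriv (hw.differentiable two_ne_zero) t x).const_mul (q x))
  rw [timeDeriv, h.deriv, inner_zero_left, add_zero, multiplier]

theorem continuous_hardyEnergy (hw : ContDiff ℝ 2 ↿w) :
    Continuous ↿(fun t => hardyEnergy (w t) (timeDeriv w t)) :=
  (contDiff_energyDensity hw).continuous.add
    (((contDiff_japPow (k := 0) (-2)).continuous.comp continuous_snd).mul (hw.continuous.pow 2))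

theorem continuous_morawetzBulk (hX : ContDiff ℝ 1 X) (hq : ContDiff ℝ 2 q)
    (hw : ContDiff ℝ 2 ↿w) : Continuous ↿(fun t => morawetzBulk X q (w t) (timeDeriv w t)) := by
  have hΔ : Continuous (Δ q) := by
    rw [funext (laplacian_eq_divergence_gradient hq)]
    exact continuous_divergence (contDiff_gradient hq le_rfl)
  have hgrad := (contDiff_gradient_slice (m := 0) hw one_le_two).continuous
  have hv := (contDiff_timeDeriv (m := 0) hw one_le_two).continuous
  exact (((((continuous_divergence hX).div_const 2).sub hq.continuous).comp continuous_snd).mul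
    ((hgrad.norm.pow 2).add (hv.pow 2))).sub
      (((hw.continuous.pow 2).div_const 2).mul (hΔ.comp continuous_snd))

theorem coneCutoff_error_le (hR : 0 < R)
    (hκ : -timeDeriv (coneCutoff R) t x ≤ κ / R * coneCutoff (2 * R) t x)
    (hX : ‖X x‖ ≤ B) (hq : |q x| ≤ B * japPow (-1) x) (hgrad : ‖∇ q x‖ ≤ B * japPow (-2) x)
    (f v : E → ℝ) :
    timeDeriv (coneCutoff R) t x * (v x * multiplier X q f x)
        + ⟪∇ (coneCutoff R t) x, morawetzFlux X q f v x⟫_ℝ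
      ≤ 3 * B * κ / R * (coneCutoff (2 * R) t x * hardyEnergy f v x) := by
  have hgradχ := norm_gradient_coneCutoff_le hR t x
  have hdecr : 0 ≤ -timeDeriv (coneCutoff R) t x := (norm_nonneg _).trans hgradχ
  have hdensity := abs_mul_multiplier_le hX hq (f := f) (v := v)
  have hflux := norm_morawetzFlux_le hX hq hgrad (f := f) (v := v)
  have hnonneg : 0 ≤ 3 * B * hardyEnergy f v x := by
    linarith [(abs_nonneg _).trans hdensity, (norm_nonneg _).trans hflux]
  calc timeDeriv (coneCutoff R) t x * (v x * multiplier X q f x)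
        + ⟪∇ (coneCutoff R t) x, morawetzFlux X q f v x⟫_ℝ
      ≤ -timeDeriv (coneCutoff R) t x * (B * hardyEnergy f v x)
        + -timeDeriv (coneCutoff R) t x * (2 * B * hardyEnergy f v x) := by
        refine add_le_add ?_ ((real_inner_le_norm _ _).trans (by gcongr))
        rw [← neg_mul_neg]
        exact mul_le_mul_of_nonneg_left ((neg_le_abs _).trans hdensity) hdecr
    _ = -timeDeriv (coneCutoff R) t x * (3 * B * hardyEnergy f v x) := by ring
    _ ≤ κ / R * coneCutoff (2 * R) t x * (3 * B * hardyEnergy f v x) := by gcongr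
    _ = 3 * B * κ / R * (coneCutoff (2 * R) t x * hardyEnergy f v x) := by ring

theorem IsMorawetzMultiplier.timeDeriv_le (hm : IsMorawetzMultiplier X q) (hw : ContDiff ℝ 2 ↿w)
    (R t : ℝ) (x : E) :
    timeDeriv (fun t x => coneCutoff R t x * (timeDeriv w t x * multiplier X q (w t) x)) t x
      ≤ coneCutoff R t x * (multiplier X q (w t) x * waveOp w t x
          - morawetzBulk X q (w t) (timeDeriv w t) x)
        + (timeDeriv (coneCutoff R) t x * (timeDeriv w t x * multiplier X q (w t) x)
          + ⟪∇ (coneCutoff R t) x, morawetzFlux X q (w t) (timeDeriv w t) x⟫_ℝ)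
        + -1 * divergence (fun y =>
          coneCutoff R t y • morawetzFlux X q (w t) (timeDeriv w t) y) x := by
  have hq := hm.contDiff_coeff
  have hχ := contDiff_coneCutoff (E := E) R (k := 1)
  have hv := contDiff_timeDeriv (m := 1) hw le_rfl
  have hM := contDiff_multiplier_slice hm.contDiff_field (hq.of_le one_le_two) hw
  have hP := contDiff_morawetzFlux hm.contDiff_field hq (contDiff_slice hw t) (contDiff_slice hv t)
  rw [timeDeriv_fun_mul (b := fun t x => timeDeriv w t x * multiplier X q (w t) x)
      (hχ.differentiable one_ne_zero) ((hv.mul hM).differentiable one_ne_zero),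
    timeDeriv_fun_mul (b := fun t => multiplier X q (w t)) (hv.differentiable one_ne_zero)
      (hM.differentiable one_ne_zero), timeDeriv_multiplier hw,
    divergence_smul ((contDiff_slice hχ t).differentiable one_ne_zero x)
      (hP.differentiable one_ne_zero x), waveOp]
  have h := mul_le_mul_of_nonneg_left
    (hm.bulk_le (contDiff_slice hw t) (contDiff_slice hv t) x) (coneCutoff_nonneg R t x)
  linear_combination h

variable [MeasurableSpace E] [BorelSpace E]

theorem intervalIntegral_integral_coneCutoff_sub_add {g h k : ℝ → E → ℝ} (hg : Continuous ↿g)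
    (hh : Continuous ↿h) (hk : Continuous ↿k) {r : ℝ} (hR : 0 < R) (hr : 0 < r) (hT : 0 ≤ T)
    (c : ℝ) :
    ∫ t in 0..T, ∫ x, (coneCutoff R t x * (g t x - h t x) + c * (coneCutoff r t x * k t x))
      = (∫ t in 0..T, ∫ x, coneCutoff R t x * g t x)
        - (∫ t in 0..T, ∫ x, coneCutoff R t x * h t x)
        + c * ∫ t in 0..T, ∫ x, coneCutoff r t x * k t x := by
  have hint {f : ℝ → E → ℝ} (hf : Continuous ↿f) {ρ : ℝ} (hρ : 0 < ρ) :=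
    (continuousOn_integral_coneCutoff_mul hf hρ T).intervalIntegrable_of_Icc (μ := volume) hT
  rw [← intervalIntegral.integral_const_mul, ← intervalIntegral.integral_sub (hint hg hR)
    (hint hh hR), ← intervalIntegral.integral_add ((hint hg hR).sub (hint hh hR))
    ((hint hk hr).const_mul c)]
  refine intervalIntegral.integral_congr fun t ht => ?_
  rw [uIcc_of_le hT] at ht
  have hslice {f : ℝ → E → ℝ} (hf : Continuous ↿f) {ρ : ℝ} (hρ : 0 < ρ) :
      Integrable fun x => coneCutoff ρ t x * f t x :=
    integrable_coneCutoff_mul (hf.comp (Continuous.prodMk_right t)) hρ ht.1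
  have hsub := hslice (f := fun t x => g t x - h t x) (hg.sub hh) hR
  rw [integral_add hsub ((hslice hk hr).const_mul c), integral_const_mul]
  simp only [mul_sub, integral_sub (hslice hg hR) (hslice hh hR)]

theorem IsMorawetzMultiplier.integral_coneCutoff_mul_le (hm : IsMorawetzMultiplier X q)
    (hB : ∀ x, ‖X x‖ ≤ B ∧ |q x| ≤ B * japPow (-1) x ∧ ‖∇ q x‖ ≤ B * japPow (-2) x)
    (hκ : ∀ t x, -timeDeriv (coneCutoff R) t x ≤ κ / R * coneCutoff (2 * R) t (x : E))
    (hw : ContDiff ℝ 2 ↿w) (hR : 0 < R) (hT : 0 ≤ T) :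
    ∫ x, coneCutoff R T x * (timeDeriv w T x * multiplier X q (w T) x)
      ≤ (∫ x, coneCutoff R 0 x * (timeDeriv w 0 x * multiplier X q (w 0) x))
        + ∫ t in 0..T, ∫ x, (coneCutoff R t x * (multiplier X q (w t) x * waveOp w t x
            - morawetzBulk X q (w t) (timeDeriv w t) x)
          + 3 * B * κ / R * (coneCutoff (2 * R) t x * hardyEnergy (w t) (timeDeriv w t) x)) := by
  have hq1 := hm.contDiff_coeff.of_le one_le_two
  have hv := contDiff_timeDeriv (m := 1) hw le_rfl
  have hM := contDiff_multiplier_slice hm.contDiff_field hq1 hw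
  have hχ (R : ℝ) : Continuous ↿(coneCutoff (E := E) R) :=
    (contDiff_coneCutoff R (k := 0)).continuous
  have hsupp (t : ℝ) (x : E) (ht : t ∈ Icc 0 T) (hx : x ∉ Metric.closedBall 0 (2 * (2 * R))) :
      coneCutoff R t x = 0 ∧ coneCutoff (2 * R) t x = 0 := by
    refine ⟨coneCutoff_eq_zero hR ht.1 fun h => hx ?_, coneCutoff_eq_zero (by positivity) ht.1 hx⟩
    exact Metric.closedBall_subset_closedBall (by linarith) h
  refine integral_le_add_of_timeDeriv_le (isCompact_closedBall 0 (2 * (2 * R))) hT (c := -1)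
    (a := fun t x => coneCutoff R t x * (timeDeriv w t x * multiplier X q (w t) x))
    (P := fun t x => coneCutoff R t x • morawetzFlux X q (w t) (timeDeriv w t) x)
    ((contDiff_coneCutoff R (k := 1)).mul (hv.mul hM)) ?_
    (fun t => (contDiff_slice (contDiff_coneCutoff R (k := 1)) t).smul
      (contDiff_morawetzFlux hm.contDiff_field hm.contDiff_coeff (contDiff_slice hw t)
        (contDiff_slice hv t)))
    (fun t x ht hx => ?_) (fun t x ht hx => ?_) (fun t x ht hx => ?_) fun t _ x => ?_
  · exact ((hχ R).mul ((hM.continuous.mul (continuous_waveOp hw)).sub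
      (continuous_morawetzBulk hm.contDiff_field hm.contDiff_coeff hw))).add
      (continuous_const.mul ((hχ (2 * R)).mul (continuous_hardyEnergy hw)))
  rotate_right
  · refine (hm.timeDeriv_le hw R t x).trans ?_
    gcongr
    exact coneCutoff_error_le hR (hκ t x) (hB x).1 (hB x).2.1 (hB x).2.2 _ _
  all_goals simp [hsupp t x ht hx]

theorem IsMorawetzMultiplier.integral_coneCutoff_mul_bulk_le_add (hm : IsMorawetzMultiplier X q)
    (hB : ∀ x, ‖X x‖ ≤ B ∧ |q x| ≤ B * japPow (-1) x ∧ ‖∇ q x‖ ≤ B * japPow (-2) x)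
    (hκ : ∀ t x, -timeDeriv (coneCutoff R) t x ≤ κ / R * coneCutoff (2 * R) t (x : E))
    (hw : ContDiff ℝ 2 ↿w) (hR : 0 < R) (hT : 0 ≤ T) :
    ∫ t in 0..T, ∫ x, coneCutoff R t x * morawetzBulk X q (w t) (timeDeriv w t) x
      ≤ (∫ x, coneCutoff R 0 x * (timeDeriv w 0 x * multiplier X q (w 0) x))
        - (∫ x, coneCutoff R T x * (timeDeriv w T x * multiplier X q (w T) x))
        + (∫ t in 0..T, ∫ x, coneCutoff R t x * (multiplier X q (w t) x * waveOp w t x))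
        + 3 * B * κ / R * ∫ t in 0..T, ∫ x,
            coneCutoff (2 * R) t x * hardyEnergy (w t) (timeDeriv w t) x := by
  have hX := hm.contDiff_field
  have hMF := (contDiff_multiplier_slice hX (hm.contDiff_coeff.of_le one_le_two) hw).continuous.mul
    (continuous_waveOp hw)
  have hsplit := intervalIntegral_integral_coneCutoff_sub_add
    (g := fun t x => multiplier X q (w t) x * waveOp w t x) hMF
    (continuous_morawetzBulk hX hm.contDiff_coeff hw) (continuous_hardyEnergy hw) hR
    (r := 2 * R) (by positivity) hT (3 * B * κ / R)
  linarith [hm.integral_coneCutoff_mul_le hB hκ hw hR hT]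

theorem abs_integral_coneCutoff_mul_multiplier_le (hd : 4 ≤ finrank ℝ E)
    (hB : ∀ x, ‖X x‖ ≤ B ∧ |q x| ≤ B * japPow (-1) x) (hw : ContDiff ℝ 2 ↿w) (hR : 0 < R)
    (ht : t ∈ Icc 0 T) (hs : HasCompactSupport (w t)) (hA : ∀ R > 0, truncatedData w R T ≤ A) :
    |∫ x, coneCutoff R t x * (timeDeriv w t x * multiplier X q (w t) x)| ≤ 8 * B * A ^ 2 := by
  have hB0 : 0 ≤ B := (norm_nonneg _).trans (hB 0).1
  have hH : Continuous (hardyEnergy (w t) (timeDeriv w t)) :=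
    (continuous_hardyEnergy hw).comp (Continuous.prodMk_right t)
  calc |∫ x, coneCutoff R t x * (timeDeriv w t x * multiplier X q (w t) x)|
      ≤ ∫ x, B * (coneCutoff R t x * hardyEnergy (w t) (timeDeriv w t) x) := by
        rw [← norm_eq_abs]
        refine norm_integral_le_of_norm_le ((integrable_coneCutoff_mul hH hR ht.1).const_mul B)
          (.of_forall fun x => ?_)
        rw [norm_mul, norm_of_nonneg (coneCutoff_nonneg R t x), mul_left_comm]
        exact mul_le_mul_of_nonneg_left (abs_mul_multiplier_le (hB x).1 (hB x).2)
          (coneCutoff_nonneg R t x)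
    _ ≤ B * (8 * A ^ 2) := by
        rw [integral_const_mul]
        exact mul_le_mul_of_nonneg_left
          (integral_coneCutoff_mul_hardyEnergy_le hd hw hR ht hs hA) hB0
    _ = 8 * B * A ^ 2 := by ring

theorem weightedNorm_multiplier_le (hd : 4 ≤ finrank ℝ E) (hX : ContDiff ℝ 1 X)
    (hq : ContDiff ℝ 1 q) (hB : ∀ x, ‖X x‖ ≤ B ∧ |q x| ≤ B * japPow (-1) x)
    (hw : ContDiff ℝ 2 ↿w) (hR : 0 < R) (ht : t ∈ Icc 0 T) (hs : HasCompactSupport (w t))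
    (hA0 : 0 ≤ A) (hA : ∀ R > 0, truncatedData w R T ≤ A) :
    weightedNorm (coneCutoff R t) (multiplier X q (w t)) volume ≤ 4 * B * A := by
  have hB0 : 0 ≤ B := (norm_nonneg _).trans (hB 0).1
  have hM := (contDiff_slice (contDiff_multiplier_slice hX hq hw) t).continuous
  have hH := (continuous_hardyEnergy hw).comp (Continuous.prodMk_right t)
  refine sqrt_le_iff.2 ⟨by positivity, ?_⟩
  calc ∫ x, coneCutoff R t x * multiplier X q (w t) x ^ 2
      ≤ ∫ x, 2 * B ^ 2 * (coneCutoff R t x * hardyEnergy (w t) (timeDeriv w t) x) := by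
        refine integral_mono (integrable_coneCutoff_mul (hM.pow 2) hR ht.1)
          ((integrable_coneCutoff_mul hH hR ht.1).const_mul _) fun x => ?_
        rw [mul_left_comm]
        refine mul_le_mul_of_nonneg_left ((multiplier_sq_le (hB x).1 (hB x).2).trans ?_)
          (coneCutoff_nonneg R t x)
        rw [hardyEnergy, add_assoc]
        exact mul_le_mul_of_nonneg_left (le_add_of_nonneg_left (sq_nonneg _)) (by positivity)
    _ ≤ 2 * B ^ 2 * (8 * A ^ 2) := by
        rw [integral_const_mul]
        gcongr
        exact integral_coneCutoff_mul_hardyEnergy_le hd hw hR ht hs hA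
    _ = (4 * B * A) ^ 2 := by ring

theorem integral_coneCutoff_mul_multiplier_mul_waveOp_le (hd : 4 ≤ finrank ℝ E)
    (hX : ContDiff ℝ 1 X) (hq : ContDiff ℝ 1 q) (hB : ∀ x, ‖X x‖ ≤ B ∧ |q x| ≤ B * japPow (-1) x)
    (hw : ContDiff ℝ 2 ↿w) (hR : 0 < R) (hT : 0 ≤ T) (hs : ∀ t ∈ Icc 0 T, HasCompactSupport (w t))
    (hA0 : 0 ≤ A) (hA : ∀ R > 0, truncatedData w R T ≤ A) :
    ∫ t in 0..T, ∫ x, coneCutoff R t x * (multiplier X q (w t) x * waveOp w t x)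
      ≤ 4 * B * A ^ 2 := by
  have hB0 : 0 ≤ B := (norm_nonneg _).trans (hB 0).1
  have hF := continuous_waveOp hw
  have hM := (contDiff_multiplier_slice hX hq hw).continuous
  have hφ := (continuousOn_weightedNorm_coneCutoff hF hR T).intervalIntegrable_of_Icc
    (μ := volume) hT
  calc ∫ t in 0..T, ∫ x, coneCutoff R t x * (multiplier X q (w t) x * waveOp w t x)
      ≤ ∫ t in 0..T, 4 * B * A * weightedNorm (coneCutoff R t) (waveOp w t) volume := by
        refine intervalIntegral.integral_mono_on hT
          ((continuousOn_integral_coneCutoff_mul (hM.mul hF) hR T).intervalIntegrable_of_Icc hT)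
          (hφ.const_mul _) fun t ht => ?_
        refine (integral_mul_mul_le_weightedNorm_mul
          (contDiff_slice (contDiff_coneCutoff R (k := 0)) t).continuous
          (hasCompactSupport_coneCutoff hR ht.1) (coneCutoff_nonneg R t)
          (hM.comp (Continuous.prodMk_right t)) (hF.comp (Continuous.prodMk_right t))).trans ?_
        exact mul_le_mul_of_nonneg_right
          (weightedNorm_multiplier_le hd hX hq hB hw hR ht (hs t ht) hA0 hA) (sqrt_nonneg _)
    _ ≤ 4 * B * A * A := by
        rw [intervalIntegral.integral_const_mul]
        gcongr
        exact (le_add_of_nonneg_left (sqrt_nonneg _)).trans (hA R hR)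
    _ = 4 * B * A ^ 2 := by ring

theorem IsMorawetzMultiplier.integral_coneCutoff_mul_bulk_le (hd : 4 ≤ finrank ℝ E)
    (hm : IsMorawetzMultiplier X q)
    (hB : ∀ x, ‖X x‖ ≤ B ∧ |q x| ≤ B * japPow (-1) x ∧ ‖∇ q x‖ ≤ B * japPow (-2) x)
    (hκ : ∀ t x, -timeDeriv (coneCutoff R) t x ≤ κ / R * coneCutoff (2 * R) t (x : E))
    (hκ0 : 0 < κ) (hw : ContDiff ℝ 2 ↿w) (hR : 0 < R) (hT : 0 ≤ T)
    (hs : ∀ t ∈ Icc 0 T, HasCompactSupport (w t)) (hA0 : 0 ≤ A)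
    (hA : ∀ R > 0, truncatedData w R T ≤ A) :
    ∫ t in 0..T, ∫ x, coneCutoff R t x * morawetzBulk X q (w t) (timeDeriv w t) x
      ≤ 20 * B * A ^ 2 + 24 * B * κ * T * A ^ 2 * R⁻¹ := by
  have hB0 : 0 ≤ B := (norm_nonneg _).trans (hB 0).1
  have hB' (x) : ‖X x‖ ≤ B ∧ |q x| ≤ B * japPow (-1) x := ⟨(hB x).1, (hB x).2.1⟩
  have hX := hm.contDiff_field
  have hq1 := hm.contDiff_coeff.of_le one_le_two
  have hH := continuous_hardyEnergy hw
  have hR2 : 0 < 2 * R := by positivity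
  have hend := abs_integral_coneCutoff_mul_multiplier_le hd hB' hw hR (right_mem_Icc.2 hT)
    (hs T (right_mem_Icc.2 hT)) hA
  have hstart := abs_integral_coneCutoff_mul_multiplier_le hd hB' hw hR (left_mem_Icc.2 hT)
    (hs 0 (left_mem_Icc.2 hT)) hA
  have hforce := integral_coneCutoff_mul_multiplier_mul_waveOp_le hd hX hq1 hB' hw hR hT hs hA0 hA
  have hcutoff : 3 * B * κ / R * ∫ t in 0..T, ∫ x,
      coneCutoff (2 * R) t x * hardyEnergy (w t) (timeDeriv w t) x
        ≤ 24 * B * κ * T * A ^ 2 * R⁻¹ := by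
    have h := intervalIntegral.integral_mono_on hT
      ((continuousOn_integral_coneCutoff_mul hH hR2 T).intervalIntegrable_of_Icc hT)
      (intervalIntegrable_const (μ := volume)) fun t ht =>
        integral_coneCutoff_mul_hardyEnergy_le hd hw hR2 ht (hs t ht) hA
    rw [intervalIntegral.integral_const, sub_zero, smul_eq_mul] at h
    refine (mul_le_mul_of_nonneg_left h (by positivity)).trans_eq ?_
    ring
  linarith [hm.integral_coneCutoff_mul_bulk_le_add hB hκ hw hR hT, abs_le.1 hend, abs_le.1 hstart]

end LocalEnergyDecay

theorem lintegral_ofReal_le_of_tendsto {α ι : Type*} [MeasurableSpace α] {μ : Measure α}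
    {l : Filter ι} [l.NeBot] [l.IsCountablyGenerated] {f : ι → α → ℝ} {g : α → ℝ} {c : ι → ℝ}
    {C : ℝ} (hint : ∀ i, Integrable (f i) μ) (hf0 : ∀ i x, 0 ≤ f i x)
    (hle : ∀ i, ∫ x, f i x ∂μ ≤ c i) (hfg : ∀ x, Tendsto (f · x) l (𝓝 (g x)))
    (hc : Tendsto c l (𝓝 C)) : ∫⁻ x, ENNReal.ofReal (g x) ∂μ ≤ ENNReal.ofReal C := by
  calc ∫⁻ x, ENNReal.ofReal (g x) ∂μ
      = ∫⁻ x, liminf (fun i => ENNReal.ofReal (f i x)) l ∂μ :=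
        lintegral_congr fun x => ((ENNReal.continuous_ofReal.tendsto _).comp (hfg x)).liminf_eq.symm
    _ ≤ liminf (fun i => ∫⁻ x, ENNReal.ofReal (f i x) ∂μ) l :=
        lintegral_liminf_le' fun i => (hint i).aemeasurable.ennreal_ofReal
    _ ≤ liminf (fun i => ENNReal.ofReal (c i)) l := by
        refine liminf_le_liminf (.of_forall fun i => ?_)
        rw [← ofReal_integral_eq_lintegral_ofReal (hint i) (.of_forall (hf0 i))]
        exact ENNReal.ofReal_le_ofReal (hle i)
    _ = ENNReal.ofReal C := ((ENNReal.continuous_ofReal.tendsto _).comp hc).liminf_eq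

section GlobalLimit

variable {E : Type*} [NormedAddCommGroup E] [InnerProductSpace ℝ E] [FiniteDimensional ℝ E]
  {g : ℝ → E → ℝ} {c : ℝ → ℝ} {R T C : ℝ}

theorem le_morawetzBulk_localEnergy {δ K : ℝ} {x : E}
    (hΔ : japPow (-3) x ≤ -Δ (localEnergyCoeff K δ : E → ℝ) x / 2) (f v : E → ℝ) :
    δ * (japPow (-1 - 2 * δ) x * (v x ^ 2 + ‖∇ f x‖ ^ 2)) + japPow (-3) x * f x ^ 2
      ≤ morawetzBulk (localEnergyField K δ) (localEnergyCoeff K δ) f v x := by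
  have h := mul_le_mul_of_nonneg_right hΔ (sq_nonneg (f x))
  rw [morawetzBulk]
  linear_combination h - (‖∇ f x‖ ^ 2 + v x ^ 2) / 2 * divergence_localEnergyField_sub K δ x

variable [MeasurableSpace E] [BorelSpace E]

theorem integral_coneCutoff_mul_slab (hg : Continuous ↿g) (hR : 0 < R) (hT : 0 ≤ T) :
    ∫ z : ℝ × E, coneCutoff R z.1 z.2 * g z.1 z.2 ∂(volume.restrict (Icc 0 T)).prod volume
      = ∫ t in 0..T, ∫ x, coneCutoff R t x * g t x := by
  rw [integral_prod _ (integrable_coneCutoff_mul_slab hg hR T), integral_Icc_eq_integral_Ioc,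
    ← intervalIntegral.integral_of_le hT]

theorem lintegral_slab_le_of_coneCutoff (hg : Continuous ↿g) (hg0 : ∀ t x, 0 ≤ g t x) (hT : 0 ≤ T)
    (hle : ∀ R > 0, ∫ t in 0..T, ∫ x, coneCutoff R t x * g t x ≤ c R)
    (hc : Tendsto c atTop (𝓝 C)) :
    ∫⁻ t in Icc 0 T, ∫⁻ x, ENNReal.ofReal (g t x) ≤ ENNReal.ofReal C := by
  have hR (n : ℕ) : (0 : ℝ) < n + 1 := n.cast_add_one_pos
  have htop : Tendsto (fun n : ℕ => (n : ℝ) + 1) atTop atTop :=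
    tendsto_atTop_add_const_right _ _ tendsto_natCast_atTop_atTop
  have hmeas : Measurable fun z : ℝ × E => ENNReal.ofReal (g z.1 z.2) :=
    (ENNReal.continuous_ofReal.comp hg).measurable
  have htendsto (z : ℝ × E) :
      Tendsto (fun n : ℕ => coneCutoff (n + 1) z.1 z.2 * g z.1 z.2) atTop (𝓝 (g z.1 z.2)) := by
    have hone := htop.eventually (eventually_coneCutoff_eq_one z.1
      (Bornology.isBounded_singleton (x := z.2)))
    refine tendsto_const_nhds.congr' (hone.mono fun n hn => ?_)
    simp only [hn _ rfl, one_mul]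
  calc ∫⁻ t in Icc 0 T, ∫⁻ x, ENNReal.ofReal (g t x)
      = ∫⁻ z : ℝ × E, ENNReal.ofReal (g z.1 z.2) ∂(volume.restrict (Icc 0 T)).prod volume :=
        (lintegral_prod _ hmeas.aemeasurable).symm
    _ ≤ ENNReal.ofReal C := lintegral_ofReal_le_of_tendsto
        (fun n => integrable_coneCutoff_mul_slab hg (hR n) T)
        (fun n z => mul_nonneg (coneCutoff_nonneg _ _ _) (hg0 _ _))
        (fun n => (integral_coneCutoff_mul_slab hg (hR n) hT).trans_le (hle _ (hR n)))
        htendsto (hc.comp htop)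

theorem IsMorawetzMultiplier.exists_lintegral_bulk_le {X : E → E} {q : E → ℝ}
    (hd : 4 ≤ finrank ℝ E) (hm : IsMorawetzMultiplier X q)
    (hpos : ∀ f v x, 0 ≤ morawetzBulk X q f v x) :
    ∃ C > 0, ∀ ⦃w : ℝ → E → ℝ⦄, ContDiff ℝ 2 ↿w → ∀ ⦃T⦄, 0 ≤ T →
      (∀ t ∈ Icc 0 T, HasCompactSupport (w t)) → ∀ ⦃A⦄, 0 ≤ A →
      (∀ R > 0, truncatedData w R T ≤ A) →
      ∫⁻ t in Icc 0 T, ∫⁻ x, ENNReal.ofReal (morawetzBulk X q (w t) (timeDeriv w t) x)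
        ≤ ENNReal.ofReal (C * A ^ 2) := by
  obtain ⟨B, hB0, hB⟩ := hm.exists_bound
  obtain ⟨κ, hκ0, hκ⟩ := exists_neg_timeDeriv_coneCutoff_le (E := E)
  refine ⟨20 * B, by positivity, fun w hw T hT hs A hA0 hA => ?_⟩
  refine lintegral_slab_le_of_coneCutoff (continuous_morawetzBulk hm.contDiff_field
    hm.contDiff_coeff hw) (fun _ _ => hpos _ _ _) hT
    (fun R hR => hm.integral_coneCutoff_mul_bulk_le hd hB (hκ R hR) hκ0 hw hR hT hs hA0 hA) ?_
  have hinv := (tendsto_inv_atTop_zero (𝕜 := ℝ)).const_mul (24 * B * κ * T * A ^ 2)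
  simpa only [mul_zero, add_zero] using hinv.const_add (20 * B * A ^ 2)

theorem exists_lintegral_energyDensity_le (hd : 4 ≤ finrank ℝ E) {δ : ℝ} (hδ : 0 < δ) :
    ∃ C > 0, ∀ ⦃w : ℝ → E → ℝ⦄, ContDiff ℝ 2 ↿w → ∀ ⦃T⦄, 0 ≤ T →
      (∀ t ∈ Icc 0 T, HasCompactSupport (w t)) → ∀ ⦃A⦄, 0 ≤ A →
      (∀ R > 0, truncatedData w R T ≤ A) →
      (∫⁻ t in Icc 0 T, ∫⁻ x, ENNReal.ofReal (japPow (-1 - 2 * δ) x * energyDensity w t x)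
          ≤ ENNReal.ofReal (C * A ^ 2)) ∧
        ∫⁻ t in Icc 0 T, ∫⁻ x, ENNReal.ofReal (japPow (-3) x * w t x ^ 2)
          ≤ ENNReal.ofReal (C * A ^ 2) := by
  obtain ⟨K, hK, hΔ⟩ := exists_laplacian_localEnergyCoeff_le hd hδ
  have hpos (s : ℝ) (x : E) := (japPow_pos s x).le
  have hlower (f : E → ℝ) (x : E) : 0 ≤ japPow (-3) x * f x ^ 2 :=
    mul_nonneg (hpos _ x) (sq_nonneg _)
  have henergy (f v : E → ℝ) (x : E) :
      0 ≤ δ * (japPow (-1 - 2 * δ) x * (v x ^ 2 + ‖∇ f x‖ ^ 2)) :=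
    mul_nonneg hδ.le (mul_nonneg (hpos _ x) (by positivity))
  have hle (f v : E → ℝ) (x : E) := le_morawetzBulk_localEnergy (hΔ x) f v
  have hbulk (f v : E → ℝ) (x : E) :=
    (add_nonneg (henergy f v x) (hlower f x)).trans (hle f v x)
  obtain ⟨C, hC, h⟩ := (isMorawetzMultiplier_localEnergy hδ hK).exists_lintegral_bulk_le hd hbulk
  refine ⟨(δ⁻¹ + 1) * C, by positivity, fun w hw T hT hs A hA0 hA => ?_⟩
  have hdom {g : ℝ → E → ℝ} (hg : ∀ t x, g t x ≤ (δ⁻¹ + 1) *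
      morawetzBulk (localEnergyField K δ) (localEnergyCoeff K δ) (w t) (timeDeriv w t) x) :
      ∫⁻ t in Icc 0 T, ∫⁻ x, ENNReal.ofReal (g t x) ≤ ENNReal.ofReal ((δ⁻¹ + 1) * C * A ^ 2) := by
    refine (lintegral_mono fun t => lintegral_mono fun x =>
      ENNReal.ofReal_le_ofReal (hg t x)).trans ?_
    have hc : 0 ≤ δ⁻¹ + 1 := by positivity
    simp only [ENNReal.ofReal_mul hc, lintegral_const_mul' _ _ ENNReal.ofReal_ne_top, mul_assoc]
    gcongr
    exact h hw hT hs hA0 hA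
  refine ⟨hdom fun t x => ?_, hdom fun t x => ?_⟩
  · have hcoercive := hle (w t) (timeDeriv w t) x
    have hscaled := mul_le_mul_of_nonneg_left hcoercive (inv_nonneg.2 hδ.le)
    rw [mul_add, inv_mul_cancel_left₀ hδ.ne'] at hscaled
    have := mul_nonneg (inv_nonneg.2 hδ.le) (hlower (w t) x)
    rw [energyDensity]
    linarith [hbulk (w t) (timeDeriv w t) x]
  · have hcoercive := hle (w t) (timeDeriv w t) x
    have := mul_nonneg (inv_nonneg.2 hδ.le) (hbulk (w t) (timeDeriv w t) x)
    linarith [henergy (w t) (timeDeriv w t) x]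

end GlobalLimit

section SpaceTimeNorm

variable {E : Type*} [NormedAddCommGroup E] [InnerProductSpace ℝ E] [FiniteDimensional ℝ E]
  {w : ℝ → E → ℝ} {R T : ℝ} [MeasurableSpace E] [BorelSpace E]

theorem eLpNorm_two_le_ofReal {α : Type*} [MeasurableSpace α] {μ : Measure α} {f : α → ℝ} {b : ℝ}
    (hb : 0 ≤ b) (h : ∫⁻ x, ENNReal.ofReal (f x ^ 2) ∂μ ≤ ENNReal.ofReal (b ^ 2)) :
    eLpNorm f 2 μ ≤ ENNReal.ofReal b := by
  have hsq : eLpNorm f 2 μ ^ 2 = ∫⁻ x, ENNReal.ofReal (f x ^ 2) ∂μ := by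
    have hpow := eLpNorm_nnreal_pow_eq_lintegral (f := f) (μ := μ) (p := 2) two_ne_zero
    norm_num [enorm_eq_ofReal_abs, ← ENNReal.ofReal_pow] at hpow
    exact_mod_cast hpow
  rwa [← (ENNReal.pow_right_strictMono two_ne_zero).le_iff_le, hsq, ← ENNReal.ofReal_pow hb]

theorem eLpNorm_slab_le_ofReal {f : ℝ → E → ℝ} (hf : Continuous ↿f) {b : ℝ} (hb : 0 ≤ b)
    (h : ∫⁻ t in Icc 0 T, ∫⁻ x, ENNReal.ofReal (f t x ^ 2) ≤ ENNReal.ofReal (b ^ 2)) :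
    eLpNorm ↿f 2 ((volume.restrict (Icc 0 T)).prod volume) ≤ ENNReal.ofReal b := by
  have hmeas : Measurable fun z : ℝ × E => ENNReal.ofReal (f z.1 z.2 ^ 2) :=
    (ENNReal.continuous_ofReal.comp (hf.pow 2)).measurable
  exact eLpNorm_two_le_ofReal hb ((lintegral_prod _ hmeas.aemeasurable).trans_le h)

theorem ofReal_truncatedData_le (hw : ContDiff ℝ 2 ↿w) (hR : 0 < R) (hT : 0 ≤ T) :
    ENNReal.ofReal (truncatedData w R T) ≤ eLpNorm (fun x => √(energyDensity w 0 x)) 2 volume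
      + ∫⁻ t in Icc 0 T, eLpNorm (waveOp w t) 2 volume := by
  have hcutoff {t : ℝ} (ht : 0 ≤ t) {f : E → ℝ} (hf : Continuous f) :
      ENNReal.ofReal (weightedNorm (coneCutoff R t) f volume) ≤ eLpNorm f 2 volume :=
    ofReal_weightedNorm_le_eLpNorm (contDiff_slice (contDiff_coneCutoff R (k := 0)) t).continuous
      (hasCompactSupport_coneCutoff hR ht) (coneCutoff_nonneg R t) (coneCutoff_le_one R t) hf
  have hinit := hcutoff le_rfl
    (contDiff_slice (contDiff_energyDensity hw) 0).continuous.sqrt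
  simp only [weightedNorm, sq_sqrt (energyDensity_nonneg w 0 _)] at hinit
  refine ENNReal.ofReal_add_le.trans (add_le_add hinit ?_)
  rw [intervalIntegral.integral_of_le hT, ← integral_Icc_eq_integral_Ioc,
    ofReal_integral_eq_lintegral_ofReal ((continuousOn_weightedNorm_coneCutoff
      (continuous_waveOp hw) hR T).integrableOn_compact isCompact_Icc)
      (.of_forall fun t => sqrt_nonneg _)]
  exact setLIntegral_mono' measurableSet_Icc fun t ht =>
    hcutoff ht.1 ((continuous_waveOp hw).comp (Continuous.prodMk_right t))

theorem exists_eLpNorm_slab_add_le (hd : 4 ≤ finrank ℝ E) {δ : ℝ} (hδ : 0 < δ) :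
    ∃ C > 0, ∀ ⦃w : ℝ → E → ℝ⦄, ContDiff ℝ 2 ↿w → ∀ ⦃T⦄, 0 ≤ T →
      (∀ t ∈ Icc 0 T, HasCompactSupport (w t)) →
      eLpNorm ↿(fun t x => japPow (-(1 / 2) - δ) x * √(energyDensity w t x)) 2
          ((volume.restrict (Icc 0 T)).prod volume)
        + eLpNorm ↿(fun t x => japPow (-3 / 2) x * w t x) 2
          ((volume.restrict (Icc 0 T)).prod volume)
        ≤ ENNReal.ofReal C * (eLpNorm (fun x => √(energyDensity w 0 x)) 2 volume
          + ∫⁻ t in Icc 0 T, eLpNorm (waveOp w t) 2 volume) := by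
  obtain ⟨C, hC, hCle⟩ := exists_lintegral_energyDensity_le hd hδ
  refine ⟨√C + √C, by positivity, fun w hw T hT hs => ?_⟩
  set N := eLpNorm (fun x => √(energyDensity w 0 x)) 2 volume
    + ∫⁻ t in Icc 0 T, eLpNorm (waveOp w t) 2 volume
  rcases eq_or_ne N ⊤ with hN | hN
  · rw [hN, ENNReal.mul_top (ENNReal.ofReal_pos.2 (by positivity)).ne']
    exact le_top
  have hdata (R : ℝ) (hR : 0 < R) : truncatedData w R T ≤ N.toReal :=
    (ENNReal.ofReal_le_iff_le_toReal hN).1 (ofReal_truncatedData_le hw hR hT)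
  obtain ⟨henergy, hlower⟩ := hCle hw hT hs ENNReal.toReal_nonneg hdata
  have hweight (s : ℝ) : Continuous fun z : ℝ × E => japPow s z.2 :=
    (contDiff_japPow s (k := 0)).continuous.comp continuous_snd
  have hb : 0 ≤ √C * N.toReal := by positivity
  have hbsq : (√C * N.toReal) ^ 2 = C * N.toReal ^ 2 := by rw [mul_pow, sq_sqrt hC.le]
  rw [ENNReal.ofReal_add (sqrt_nonneg C) (sqrt_nonneg C), add_mul]
  conv_rhs => rw [← ENNReal.ofReal_toReal hN, ← ENNReal.ofReal_mul (sqrt_nonneg C)]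
  refine add_le_add
    (eLpNorm_slab_le_ofReal ((hweight _).mul (contDiff_energyDensity hw).continuous.sqrt) hb ?_)
    (eLpNorm_slab_le_ofReal ((hweight _).mul hw.continuous) hb ?_)
  · convert henergy using 6
    · rw [mul_pow, japPow_sq, sq_sqrt (energyDensity_nonneg _ _ _)]
      ring_nf
  · convert hlower using 6
    · rw [mul_pow, japPow_sq]
      ring_nf

end SpaceTimeNorm

section Coordinates

variable {n : ℕ} {w : ℝ → Eu n → ℝ}

theorem sd_eq_gradient_apply (f : Eu n → ℝ) (x : Eu n) (i : Fin n) : sd i f x = ∇ f x i := by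
  rw [sd, ← inner_gradient_left, EuclideanSpace.inner_single_right, one_mul]
  rfl

theorem gradMag_eq_sqrt_energyDensity (w : ℝ → Eu n → ℝ) (t : ℝ) (x : Eu n) :
    gradMag w t x = √(energyDensity w t x) := by
  simp only [gradMag, energyDensity, Fin.sum_univ_succ, EuclideanSpace.norm_sq_eq,
    norm_eq_abs, sq_abs, ← sd_eq_gradient_apply]
  rfl

theorem sd_sd {f : Eu n → ℝ} (hf : ContDiff ℝ 2 f) (i : Fin n) (x : Eu n) :
    sd i (sd i f) x = iteratedFDeriv ℝ 2 f x
      ![EuclideanSpace.single i 1, EuclideanSpace.single i 1] := by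
  have hfderiv : DifferentiableAt ℝ (fderiv ℝ f) x :=
    (hf.fderiv_right (m := 1) le_rfl).differentiable one_ne_zero x
  unfold sd
  rw [iteratedFDeriv_two_apply, fderiv_clm_apply hfderiv (differentiableAt_const _)]
  simp

theorem dAlembert_eq_waveOp (hw : ContDiff ℝ 2 ↿w) : dAlembert w = waveOp w := by
  funext t x
  have hlap := congrFun (laplacian_eq_iteratedFDeriv_orthonormalBasis (w t)
    (EuclideanSpace.basisFun (Fin n) ℝ)) x
  simp only [EuclideanSpace.basisFun_apply] at hlap
  simp only [dAlembert, waveOp, hlap, sd_sd (contDiff_slice hw t)]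
  rfl

theorem jap_rpow (x : Eu n) (s : ℝ) : jap x ^ s = japPow s x := by
  rw [jap, japPow, sqrt_eq_rpow, ← rpow_mul (by positivity), one_div_mul_eq_div]

theorem localized_energy_estimate_dim4_general (hn : 4 ≤ n) {δ : ℝ} (hδ : 0 < δ) :
    ∃ C : ℝ, 0 < C ∧ ∀ w : ℝ → Eu n → ℝ, ContDiff ℝ 2 ↿w → ∀ T : ℝ, 0 ≤ T →
      (∀ t ∈ Icc 0 T, ∃ R : ℝ, ∀ x, R < ‖x‖ → w t x = 0) →
      L2st T univ (fun t x => jap x ^ (-(1/2 : ℝ) - δ) * gradMag w t x)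
          + L2st T univ (fun t x => jap x ^ (-(3 : ℝ)/2) * w t x)
        ≤ ENNReal.ofReal C * (L2x univ (fun x => gradMag w 0 x)
            + ∫⁻ t in Icc (0 : ℝ) T, L2x univ (fun x => dAlembert w t x)) := by
  obtain ⟨C, hC, h⟩ := exists_eLpNorm_slab_add_le (E := Eu n) (by simpa using hn) hδ
  refine ⟨C, hC, fun w hw T hT hs => ?_⟩
  have hcompact (t : ℝ) (ht : t ∈ Icc 0 T) : HasCompactSupport (w t) := by
    obtain ⟨R, hR⟩ := hs t ht
    exact .intro (isCompact_closedBall 0 R) fun x hx => hR x (by simpa using hx)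
  simp only [L2st, L2x, Measure.restrict_univ, jap_rpow, gradMag_eq_sqrt_energyDensity,
    dAlembert_eq_waveOp hw]
  exact h hw hT hcompact

end Coordinates

/-- Localized energy estimate in ℝ₊ × ℝ⁴ with the lower order term. -/
theorem localized_energy_estimate_dim4 (δ : ℝ) (hδ : 0 < δ) :
    ∃ C : ℝ, 0 < C ∧ ∀ (w F : ℝ → Eu 4 → ℝ) (w₀ w₁ : Eu 4 → ℝ), SmoothTX w →
      (∀ t : ℝ, 0 ≤ t → ∀ x, dAlembert w t x = F t x) →
      (∀ x, w 0 x = w₀ x) → (∀ x, td w 0 x = w₁ x) →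
      (∀ t : ℝ, ∃ R : ℝ, ∀ x : Eu 4, R < ‖x‖ → w t x = 0) →
      ∀ T : ℝ, 0 < T →
        L2st T univ (fun t x => jap x ^ (-(1/2 : ℝ) - δ) * gradMag w t x)
          + L2st T univ (fun t x => jap x ^ (-(3 : ℝ)/2) * w t x)
          ≤ ENNReal.ofReal C *
            (L2x univ (fun x => gradMag w 0 x)
              + ∫⁻ t in Icc (0 : ℝ) T, L2x univ (fun x => dAlembert w t x)) := by
  obtain ⟨C, hC, h⟩ := localized_energy_estimate_dim4_general le_rfl hδ
  exact ⟨C, hC, fun w _ _ _ hw _ _ _ hs T hT =>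
    h w (contDiff_infty.1 hw 2) T hT.le fun t _ => hs t⟩
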